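/- Almost all cographs have a cospectral mate. Precisely, letting c(n) denote the number of isomorphism classes of cographs on n vertices and c*(n) denote the number of isomorphism classes of cographs on n vertices G for which there exists a graph H on n vertices that is cospectral with G but not isomorphic to G, one has lim_{n→∞} c*(n)/c(n) = 1. -/

import Mathlib

open SimpleGraph

/-- The characteristic polynomial (over `ℝ`) of the adjacency matrix of a finite graph. -/
noncomputable def adjCharPoly {V : Type} [Fintype V] [DecidableEq V] (G : SimpleGraph V) :
    Polynomial ℝ :=
  letI := Classical.decRel G.Adj
  Matrix.charpoly (G.adjMatrix ℝ)

/-- Two finite graphs are cospectral if their adjacency matrices have the same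
characteristic polynomial. -/
def Cospectral {V W : Type} [Fintype V] [DecidableEq V] [Fintype W] [DecidableEq W]
    (G : SimpleGraph V) (H : SimpleGraph W) : Prop :=
  adjCharPoly G = adjCharPoly H

/-- Generalized cospectrality: the graphs are cospectral and so are their complements. -/
def GenCospectral {V W : Type} [Fintype V] [DecidableEq V] [Fintype W] [DecidableEq W]
    (G : SimpleGraph V) (H : SimpleGraph W) : Prop :=
  Cospectral G H ∧ Cospectral Gᶜ Hᶜ

/-- A cograph is a graph with no induced path `P₄` (on 4 vertices). -/
def IsCograph {V : Type} (G : SimpleGraph V) : Prop :=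
  ¬ ∃ f : Fin 4 ↪ V, ∀ i j, G.Adj (f i) (f j) ↔ (SimpleGraph.pathGraph 4).Adj i j

/-- The number of isomorphism classes of graphs on `n` vertices satisfying an
isomorphism-invariant property `P`. -/
noncomputable def classCount (n : ℕ) (P : SimpleGraph (Fin n) → Prop) : ℕ :=
  Nat.card (Quot fun G H : {G : SimpleGraph (Fin n) // P G} => Nonempty (G.1 ≃g H.1))

/-!
A cograph with at least two vertices is disconnected exactly when its complement is connected. So in
a class of cographs closed under complements and components, half of the members of each order are
connected, and since the members are determined by their multisets of components, the numbers `u n`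
of connected members satisfy, with equality when the class is closed under disjoint unions,
`1 + 2 * ∑ u n * x ^ n - x ≤ ∏ (1 - x ^ n) ^ (-u n)`.

Call two graphs regularly similar if their adjacency matrices are similar by a matrix all of whose
row and column sums are one. Regularly similar graphs are cospectral, and regular similarity is
preserved by complements and disjoint unions. Hence the cographs without a nonisomorphic regularly
similar mate form a class closed under complements and components, and Godsil-McKay switching
produces a connected cograph outside of it. If `s n ≤ t n` are the numbers of connected members of
this class and of connected cographs, then at the radius of convergence `ρ` of `∑ t n * x ^ n` the
inequality for `s` has room to spare because `s n < t n` for some `n`. So `∑ s n * x ^ n` still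
converges at some `x > ρ`, while `t n * x ^ n` stays bounded below by supermultiplicativity of `t`;
therefore `s n / t n → 0`.
-/

/-! ### Generating functions dominated by Euler products -/

section RadiusComparison

open Finset Real Filter Topology

/-- The part of order at least two of `-log (1 - y)`, so that the logarithm of an Euler product
`∏ (1 - x ^ n) ^ (-u n)` is `∑ u n * x ^ n + ∑ u n * logTail (x ^ n)`. -/
noncomputable def logTail (y : ℝ) : ℝ := -log (1 - y) - y

lemma abs_logTail_le {y : ℝ} (h0 : 0 ≤ y) (h1 : y < 1) : |logTail y| ≤ y ^ 2 / (1 - y) := by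
  have h := abs_log_sub_add_sum_range_le (x := y) (by rwa [abs_of_nonneg h0]) 1
  rw [abs_of_nonneg h0] at h
  rw [logTail, ← abs_neg]
  simpa [add_comm] using h

lemma logTail_nonneg {y : ℝ} (h1 : y < 1) : 0 ≤ logTail y := by
  rw [logTail]
  linarith [log_le_sub_one_of_pos (sub_pos.2 h1)]

lemma logTail_pos {y : ℝ} (h0 : 0 < y) (h1 : y < 1) : 0 < logTail y := by
  rw [logTail]
  linarith [log_lt_sub_one_of_pos (sub_pos.2 h1) (by linarith)]

lemma continuousOn_logTail : ContinuousOn logTail (Set.Iio 1) := by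
  unfold logTail
  exact ((continuousOn_const.sub continuousOn_id).log fun y hy => (sub_pos.2 hy).ne').neg.sub
    continuousOn_id

/-- The truncated generating function of `u` is dominated by a truncated Euler product: the
inequality satisfied when sums of fewer than `N` connected objects account for all objects of size
less than `N` and for the disconnected ones of size `N`, each size having as many disconnected as
connected objects (the correction `x` comes from size one). -/
def TruncationLEEuler (u : ℕ → ℝ) : Prop :=
  ∀ (N : ℕ) (x : ℝ), 0 ≤ x → x < 1 →
    1 + ∑ n ∈ range N, u n * x ^ n + ∑ n ∈ range (N + 1), u n * x ^ n ≤
      exp (∑ n ∈ range N, u n * -log (1 - x ^ n)) + x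

/-- The converse domination of the truncated Euler products by the full generating function. -/
def EulerLETotal (u : ℕ → ℝ) : Prop :=
  ∀ (N : ℕ) (x : ℝ), 0 ≤ x → x < 1 → (Summable fun n => u n * x ^ n) →
    exp (∑ n ∈ range N, u n * -log (1 - x ^ n)) + x ≤ 1 + 2 * ∑' n, u n * x ^ n

variable {s t u : ℕ → ℝ} {x : ℝ}

lemma sum_mul_neg_log_eq (N : ℕ) :
    ∑ n ∈ range N, u n * -log (1 - x ^ n) =
      ∑ n ∈ range N, u n * x ^ n + ∑ n ∈ range N, u n * logTail (x ^ n) := by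
  rw [← sum_add_distrib]
  exact sum_congr rfl fun n _ => by rw [logTail]; ring

lemma mul_logTail_nonneg (hu : ∀ n, 0 ≤ u n) (hu0 : u 0 = 0) (h0 : 0 ≤ x) (h1 : x < 1) (n : ℕ) :
    0 ≤ u n * logTail (x ^ n) := by
  rcases eq_or_ne n 0 with rfl | hn
  · simp [hu0]
  · exact mul_nonneg (hu n) (logTail_nonneg (pow_lt_one₀ h0 h1 hn))

lemma abs_mul_logTail_le (hu : ∀ n, 0 ≤ u n) (hu0 : u 0 = 0) {a : ℝ} (h0 : 0 ≤ x) (hxa : x ≤ a)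
    (ha : a < 1) (n : ℕ) : |u n * logTail (x ^ n)| ≤ (1 - a)⁻¹ * (u n * (a ^ 2) ^ n) := by
  rcases eq_or_ne n 0 with rfl | hn
  · simp [hu0]
  have hxn : x ^ n ≤ a := (pow_le_of_le_one h0 (hxa.trans ha.le) hn).trans hxa
  have hx2 : (x ^ n) ^ 2 ≤ (a ^ 2) ^ n := by
    rw [← pow_mul, mul_comm, pow_mul]
    gcongr
  calc |u n * logTail (x ^ n)| = u n * |logTail (x ^ n)| := by rw [abs_mul, abs_of_nonneg (hu n)]
    _ ≤ u n * ((x ^ n) ^ 2 / (1 - x ^ n)) :=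
        mul_le_mul_of_nonneg_left (abs_logTail_le (by positivity) (hxn.trans_lt ha)) (hu n)
    _ ≤ u n * ((a ^ 2) ^ n / (1 - a)) := by
        have := hu n
        gcongr
    _ = (1 - a)⁻¹ * (u n * (a ^ 2) ^ n) := by rw [div_eq_mul_inv]; ring

lemma summable_mul_pow_of_le (hu : ∀ n, 0 ≤ u n) {y : ℝ} (h0 : 0 ≤ x) (hxy : x ≤ y)
    (h : Summable fun n => u n * y ^ n) : Summable fun n => u n * x ^ n :=
  h.of_nonneg_of_le (fun n => mul_nonneg (hu n) (by positivity)) fun n =>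
    mul_le_mul_of_nonneg_left (by gcongr) (hu n)

lemma summable_mul_logTail (hu : ∀ n, 0 ≤ u n) (hu0 : u 0 = 0) (h0 : 0 ≤ x) (h1 : x < 1)
    (h : Summable fun n => u n * (x ^ 2) ^ n) : Summable fun n => u n * logTail (x ^ n) :=
  (h.mul_left (1 - x)⁻¹).of_norm_bounded fun n => abs_mul_logTail_le hu hu0 h0 le_rfl h1 n

lemma continuousOn_tsum_mul_logTail (hu : ∀ n, 0 ≤ u n) (hu0 : u 0 = 0) {a : ℝ} (ha : a < 1)
    (h : Summable fun n => u n * (a ^ 2) ^ n) :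
    ContinuousOn (fun x => ∑' n, u n * logTail (x ^ n)) (Set.Icc 0 a) := by
  refine continuousOn_tsum (fun n => ?_) (h.mul_left (1 - a)⁻¹) fun n x hx =>
    abs_mul_logTail_le hu hu0 hx.1 hx.2 ha n
  rcases eq_or_ne n 0 with rfl | hn
  · simp [hu0, continuousOn_const]
  · exact continuousOn_const.mul (continuousOn_logTail.comp (continuousOn_pow n) fun x hx =>
      pow_lt_one₀ hx.1 (hx.2.trans_lt ha) hn)

lemma le_of_add_succ_le_exp {p : ℕ → ℝ} {c K B : ℝ} (hc : 1 ≤ c) (hK : 0 ≤ K)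
    (hp : ∀ N, 0 ≤ p N) (hp0 : p 0 ≤ B)
    (hstep : ∀ N, 1 + p N + p (N + 1) ≤ exp (c * p N + K) + x)
    (hB : exp (c * B + K) + x ≤ 1 + 2 * B) (N : ℕ) : p N ≤ B := by
  -- `a ↦ exp (c * a + K) - a` is monotone on `[0, ∞)`
  induction N with
  | zero => exact hp0
  | succ N ih =>
    have hone : 1 ≤ exp (c * p N + K) :=
      one_le_exp (add_nonneg (mul_nonneg (by linarith) (hp N)) hK)
    have hconv : exp (c * p N + K) * (1 + c * (B - p N)) ≤ exp (c * B + K) := by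
      rw [show c * B + K = (c * p N + K) + c * (B - p N) by ring, exp_add _ (c * _)]
      refine mul_le_mul_of_nonneg_left ?_ (exp_pos _).le
      linarith [add_one_le_exp (c * (B - p N))]
    have hmono : B - p N ≤ exp (c * p N + K) * (c * (B - p N)) := by
      nlinarith [mul_le_mul hone hc zero_le_one (exp_pos _).le, sub_nonneg.2 ih]
    linarith [hstep N]

lemma sum_le_of_sum_neg_log_le (hu : ∀ n, 0 ≤ u n) (hlow : TruncationLEEuler u) {c K B : ℝ}
    (hc : 1 ≤ c) (hK : 0 ≤ K) (hB0 : 0 ≤ B) (h0 : 0 ≤ x) (h1 : x < 1)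
    (hlog : ∀ N, ∑ n ∈ range N, u n * -log (1 - x ^ n) ≤ c * ∑ n ∈ range N, u n * x ^ n + K)
    (hB : exp (c * B + K) + x ≤ 1 + 2 * B) (N : ℕ) : ∑ n ∈ range N, u n * x ^ n ≤ B :=
  le_of_add_succ_le_exp hc hK
    (fun _ => sum_nonneg fun n _ => mul_nonneg (hu n) (by positivity)) (by simpa using hB0)
    (fun N => (hlow N x h0 h1).trans (by gcongr; exact hlog N)) hB N

lemma sum_mul_tenth_pow_le (hu : ∀ n, 0 ≤ u n) (hu0 : u 0 = 0) (hlow : TruncationLEEuler u)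
    (N : ℕ) : ∑ n ∈ range N, u n * (1 / 10 : ℝ) ^ n ≤ 1 / 4 := by
  refine sum_le_of_sum_neg_log_le (c := 10 / 9) (K := 0) hu hlow (by norm_num) le_rfl (by norm_num)
    (by norm_num) (by norm_num) (fun N => ?_) ?_ N
  · rw [add_zero, mul_sum]
    refine sum_le_sum fun n _ => ?_
    rcases eq_or_ne n 0 with rfl | hn
    · simp [hu0]
    have hpow : (1 / 10 : ℝ) ^ n ≤ 1 / 10 := pow_le_of_le_one (by norm_num) (by norm_num) hn
    have hpos : 0 < 1 - (1 / 10 : ℝ) ^ n := by linarith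
    have hlog : -log (1 - (1 / 10 : ℝ) ^ n) ≤ 10 / 9 * (1 / 10 : ℝ) ^ n := by
      have hinv : (1 - (1 / 10 : ℝ) ^ n)⁻¹ ≤ 1 + 10 / 9 * (1 / 10 : ℝ) ^ n := by
        rw [inv_le_iff_one_le_mul₀ hpos]
        nlinarith [pow_nonneg (by norm_num : (0 : ℝ) ≤ 1 / 10) n]
      linarith [one_sub_inv_le_log_of_pos hpos]
    calc u n * -log (1 - (1 / 10 : ℝ) ^ n) ≤ u n * (10 / 9 * (1 / 10 : ℝ) ^ n) :=
          mul_le_mul_of_nonneg_left hlog (hu n)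
      _ = 10 / 9 * (u n * (1 / 10 : ℝ) ^ n) := by ring
  · have hexp : exp (10 / 9 * (1 / 4) + 0) ≤ 1 / (1 - (10 / 9 * (1 / 4) + 0)) :=
      exp_bound_div_one_sub_of_interval (by norm_num) (by norm_num)
    linarith

lemma subadditive_neg_log_div {C : ℝ} (hC : 0 < C) (ht0 : t 0 = 0) (hpos : ∀ n, n ≠ 0 → 0 < t n)
    (hsup : ∀ m n, m ≠ 0 → n ≠ 0 → t m * t n ≤ C * t (m + n)) :
    Subadditive fun n => -log (t n / C) := by
  -- the value at `0` is `-log 0 = 0`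
  intro m n
  rcases eq_or_ne m 0 with rfl | hm
  · simp [ht0]
  rcases eq_or_ne n 0 with rfl | hn
  · simp [ht0]
  have htm := hpos m hm
  have htn := hpos n hn
  rw [← neg_add, neg_le_neg_iff, ← log_mul (by positivity) (by positivity)]
  apply log_le_log (by positivity)
  rw [div_mul_div_comm, div_le_div_iff₀ (by positivity) hC]
  nlinarith [hsup m n hm hn]

lemma log_mul_pow_div {a y C : ℝ} (ha : a ≠ 0) (hy : y ≠ 0) (hC : C ≠ 0) {n : ℕ} (hn : n ≠ 0) :
    log (a * y ^ n / C) = n * (log y - -log (a / C) / n) := by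
  rw [mul_div_right_comm, log_mul (div_ne_zero ha hC) (pow_ne_zero n hy), log_pow]
  field_simp
  ring

lemma bddBelow_range_neg_log_div {C B x₀ : ℝ} (hC : 0 < C) (hx₀ : 0 < x₀)
    (hpos : ∀ n, n ≠ 0 → 0 < t n) (hB : ∀ n, t n * x₀ ^ n ≤ B) :
    BddBelow (Set.range fun n : ℕ => -log (t n / C) / n) := by
  refine ⟨min 0 (log x₀ - |log (B / C)|), ?_⟩
  rintro _ ⟨n, rfl⟩
  rcases eq_or_ne n 0 with rfl | hn
  · simp
  have htn := hpos n hn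
  have hn1 : (1 : ℝ) ≤ n := by exact_mod_cast Nat.one_le_iff_ne_zero.2 hn
  have hle : log (t n * x₀ ^ n / C) ≤ |log (B / C)| := by
    refine (log_le_log (by positivity) ?_).trans (le_abs_self _)
    gcongr
    exact hB n
  rw [log_mul_pow_div htn.ne' hx₀.ne' hC.ne' hn] at hle
  refine min_le_of_right_le ?_
  nlinarith [abs_nonneg (log (B / C))]

lemma exists_radius_of_supermultiplicative {C B x₀ : ℝ} (hC : 0 < C) (hx₀ : 0 < x₀)
    (ht0 : t 0 = 0) (hpos : ∀ n, n ≠ 0 → 0 < t n)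
    (hsup : ∀ m n, m ≠ 0 → n ≠ 0 → t m * t n ≤ C * t (m + n))
    (hB : ∀ n, t n * x₀ ^ n ≤ B) :
    ∃ ρ, 0 < ρ ∧ (∀ n, n ≠ 0 → t n * ρ ^ n ≤ C) ∧
      ∀ y, ρ < y → ∀ᶠ n in atTop, C < t n * y ^ n := by
  have hsub := subadditive_neg_log_div hC ht0 hpos hsup
  have hbdd := bddBelow_range_neg_log_div hC hx₀ hpos hB
  refine ⟨exp hsub.lim, exp_pos _, fun n hn => ?_, fun y hy => ?_⟩
  · have hpow := mul_pos (hpos n hn) (pow_pos (exp_pos hsub.lim) n)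
    rw [← div_le_one hC, ← log_nonpos_iff (div_pos hpow hC).le,
      log_mul_pow_div (hpos n hn).ne' (exp_pos _).ne' hC.ne' hn, log_exp]
    exact mul_nonpos_of_nonneg_of_nonpos n.cast_nonneg
      (sub_nonpos.2 (hsub.lim_le_div hbdd hn))
  · have hy0 : 0 < y := (exp_pos _).trans hy
    filter_upwards [(hsub.tendsto_lim hbdd).eventually_lt_const ((lt_log_iff_exp_lt hy0).2 hy),
      eventually_ne_atTop 0] with n hlt hn
    have hpow := mul_pos (hpos n hn) (pow_pos hy0 n)
    rw [← one_lt_div hC, ← log_pos_iff (div_pos hpow hC).le,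
      log_mul_pow_div (hpos n hn).ne' hy0.ne' hC.ne' hn]
    exact mul_pos (by exact_mod_cast Nat.pos_of_ne_zero hn) (sub_pos.2 hlt)

lemma tsum_le_two_of_eulerLETotal (hu : ∀ n, 0 ≤ u n) (hu0 : u 0 = 0) (hup : EulerLETotal u)
    (h0 : 0 ≤ x) (h1 : x < 1) (h : Summable fun n => u n * x ^ n) : ∑' n, u n * x ^ n ≤ 2 := by
  set T := ∑' n, u n * x ^ n
  have hexp : exp T ≤ 1 + 2 * T := by
    refine le_of_tendsto ((continuous_exp.tendsto T).comp h.hasSum.tendsto_sum_nat)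
      (Eventually.of_forall fun N => le_trans ?_ ((le_add_of_nonneg_right h0).trans
        (hup N x h0 h1 h)))
    simp only [Function.comp_apply, exp_le_exp, sum_mul_neg_log_eq]
    exact le_add_of_nonneg_right (sum_nonneg fun n _ => mul_logTail_nonneg hu hu0 h0 h1 n)
  have hT : 0 ≤ T := tsum_nonneg fun n => mul_nonneg (hu n) (by positivity)
  nlinarith [quadratic_le_exp_of_nonneg hT]

lemma exp_tsum_add_tsum_logTail_le (hu : ∀ n, 0 ≤ u n) (hu0 : u 0 = 0) (hup : EulerLETotal u)
    (h0 : 0 ≤ x) (h1 : x < 1) (h : Summable fun n => u n * x ^ n) :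
    exp (∑' n, u n * x ^ n + ∑' n, u n * logTail (x ^ n)) + x ≤ 1 + 2 * ∑' n, u n * x ^ n := by
  have htail := summable_mul_logTail hu hu0 h0 h1
    (summable_mul_pow_of_le hu (by positivity) (pow_le_of_le_one h0 h1.le two_ne_zero) h)
  refine le_of_tendsto (((continuous_exp.tendsto _).comp
    (h.hasSum.tendsto_sum_nat.add htail.hasSum.tendsto_sum_nat)).add_const x)
    (Eventually.of_forall fun N => ?_)
  simpa only [Function.comp_apply, ← sum_mul_neg_log_eq] using hup N x h0 h1 h

lemma sum_le_two_of_radius (hu : ∀ n, 0 ≤ u n) (hu0 : u 0 = 0) (hup : EulerLETotal u) {C ρ : ℝ}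
    (hρ : 0 < ρ) (hρ1 : ρ ≤ 1) (hC : ∀ n, n ≠ 0 → u n * ρ ^ n ≤ C) (N : ℕ) :
    ∑ n ∈ range N, u n * ρ ^ n ≤ 2 := by
  have hC0 : 0 ≤ C := (mul_nonneg (hu 1) (by positivity)).trans (hC 1 one_ne_zero)
  have hsummable {x : ℝ} (h0 : 0 ≤ x) (hx : x < ρ) : Summable fun n => u n * x ^ n := by
    refine ((summable_geometric_of_lt_one (div_nonneg h0 hρ.le)
      ((div_lt_one hρ).2 hx)).mul_left C).of_nonneg_of_le
      (fun n => mul_nonneg (hu n) (by positivity)) fun n => ?_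
    rcases eq_or_ne n 0 with rfl | hn
    · simpa [hu0] using hC0
    calc u n * x ^ n = u n * ρ ^ n * (x / ρ) ^ n := by rw [div_pow]; field_simp
      _ ≤ C * (x / ρ) ^ n := by gcongr; exact hC n hn
  have hcont : Continuous fun x => ∑ n ∈ range N, u n * x ^ n := by fun_prop
  refine le_of_tendsto (hcont.continuousWithinAt (s := Set.Iio ρ) (x := ρ))
    (Filter.mem_of_superset (Ioo_mem_nhdsLT hρ) fun x hx => ?_)
  have hsum := hsummable hx.1.le hx.2
  exact (hsum.sum_le_tsum _ fun n _ => mul_nonneg (hu n) (pow_nonneg hx.1.le n)).trans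
    (tsum_le_two_of_eulerLETotal hu hu0 hup hx.1.le (hx.2.trans_le hρ1) hsum)

lemma radius_lt_one (hu : ∀ n, 0 ≤ u n) (hu0 : u 0 = 0) (hup : EulerLETotal u)
    (hone : ∀ n, n ≠ 0 → 1 ≤ u n) {C ρ : ℝ} (hC : ∀ n, n ≠ 0 → u n * ρ ^ n ≤ C) : ρ < 1 := by
  by_contra! hρ
  have h := sum_le_two_of_radius hu hu0 hup one_pos le_rfl
    (fun n hn => (mul_le_mul_of_nonneg_left (pow_le_pow_left₀ zero_le_one hρ n) (hu n)).trans
      (hC n hn)) 4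
  simp only [sum_range_succ, range_zero, sum_empty, one_pow, mul_one] at h
  linarith [hu 0, hone 1 (by norm_num), hone 2 (by norm_num), hone 3 (by norm_num)]

lemma tsum_mul_logTail_lt (hs : ∀ n, 0 ≤ s n) (hs0 : s 0 = 0) (ht0 : t 0 = 0)
    (hst : ∀ n, s n ≤ t n) (hlt : ∃ k, s k < t k) (h0 : 0 < x) (h1 : x < 1)
    (h : Summable fun n => t n * (x ^ 2) ^ n) :
    ∑' n, s n * logTail (x ^ n) < ∑' n, t n * logTail (x ^ n) := by
  obtain ⟨k, hk⟩ := hlt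
  have hk0 : k ≠ 0 := by
    rintro rfl
    exact hk.ne (hs0.trans ht0.symm)
  have hle n : s n * logTail (x ^ n) ≤ t n * logTail (x ^ n) := by
    rcases eq_or_ne n 0 with rfl | hn
    · simp [hs0, ht0]
    · exact mul_le_mul_of_nonneg_right (hst n) (logTail_nonneg (pow_lt_one₀ h0.le h1 hn))
  have ht := summable_mul_logTail (fun n => (hs n).trans (hst n)) ht0 h0.le h1 h
  exact (ht.of_nonneg_of_le (mul_logTail_nonneg hs hs0 h0.le h1) hle).tsum_lt_tsum hle
    (mul_lt_mul_of_pos_right hk (logTail_pos (by positivity) (pow_lt_one₀ h0.le h1 hk0))) ht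

lemma summable_of_exp_add_tsum_logTail_le (hu : ∀ n, 0 ≤ u n) (hu0 : u 0 = 0)
    (hlow : TruncationLEEuler u) (h0 : 0 ≤ x) (h1 : x < 1)
    (hsq : Summable fun n => u n * (x ^ 2) ^ n) {T : ℝ} (hT : 0 ≤ T)
    (h : exp (T + ∑' n, u n * logTail (x ^ n)) + x ≤ 1 + 2 * T) :
    Summable fun n => u n * x ^ n := by
  have htail_nonneg := mul_logTail_nonneg hu hu0 h0 h1
  refine summable_of_sum_range_le (fun n => mul_nonneg (hu n) (by positivity)) <|
    sum_le_of_sum_neg_log_le hu hlow le_rfl (tsum_nonneg htail_nonneg) hT h0 h1 (fun N => ?_)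
      (by rwa [one_mul])
  rw [sum_mul_neg_log_eq, one_mul]
  gcongr
  exact (summable_mul_logTail hu hu0 h0 h1 hsq).sum_le_tsum _ fun n _ => htail_nonneg n

lemma exists_summable_beyond (hs : ∀ n, 0 ≤ s n) (hs0 : s 0 = 0) (hslow : TruncationLEEuler s)
    (ht0 : t 0 = 0) (htup : EulerLETotal t) (hst : ∀ n, s n ≤ t n)
    (hlt : ∃ k, s k < t k) {ρ : ℝ} (hρ : 0 < ρ) (hρ1 : ρ < 1)
    (hsum : Summable fun n => t n * ρ ^ n) : ∃ x, ρ < x ∧ Summable fun n => s n * x ^ n := by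
  have ht n : 0 ≤ t n := (hs n).trans (hst n)
  have hρsqrt : ρ < √ρ := lt_sqrt_of_sq_lt (pow_lt_self_of_lt_one₀ hρ hρ1 one_lt_two)
  have hsqrt1 : √ρ < 1 := (sqrt_lt' one_pos).2 (by simpa using hρ1)
  have hsq : Summable fun n => t n * (ρ ^ 2) ^ n :=
    summable_mul_pow_of_le ht (by positivity) (pow_le_of_le_one hρ.le hρ1.le two_ne_zero) hsum
  have hsum_s : Summable fun n => s n * (√ρ ^ 2) ^ n := by
    rw [sq_sqrt hρ.le]
    exact hsum.of_nonneg_of_le (fun n => mul_nonneg (hs n) (by positivity)) fun n => by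
      gcongr; exact hst n
  set T := ∑' n, t n * ρ ^ n
  have hT : 0 ≤ T := tsum_nonneg fun n => mul_nonneg (ht n) (by positivity)
  have hstrict : exp (T + ∑' n, s n * logTail (ρ ^ n)) + ρ < 1 + 2 * T :=
    lt_of_lt_of_le (by gcongr; exact tsum_mul_logTail_lt hs hs0 ht0 hst hlt hρ hρ1 hsq)
      (exp_tsum_add_tsum_logTail_le ht ht0 htup hρ.le hρ1 hsum)
  have hcont : Tendsto (fun x => exp (T + ∑' n, s n * logTail (x ^ n)) + x) (𝓝[>] ρ)
      (𝓝 (exp (T + ∑' n, s n * logTail (ρ ^ n)) + ρ)) := by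
    refine ContinuousAt.continuousWithinAt ?_
    have := (continuousOn_tsum_mul_logTail hs hs0 hsqrt1 hsum_s).continuousAt
      (Icc_mem_nhds hρ hρsqrt)
    fun_prop
  obtain ⟨x, hx, hρx, hxsqrt⟩ := ((hcont.eventually_lt_const hstrict).and
    (Ioo_mem_nhdsGT hρsqrt)).exists
  have hx0 : 0 ≤ x := hρ.le.trans hρx.le
  exact ⟨x, hρx, summable_of_exp_add_tsum_logTail_le hs hs0 hslow hx0 (hxsqrt.trans hsqrt1)
    (summable_mul_pow_of_le hs (by positivity) (by gcongr) hsum_s) hT hx.le⟩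

theorem tendsto_div_zero_of_euler (hs : ∀ n, 0 ≤ s n) (hs0 : s 0 = 0)
    (hslow : TruncationLEEuler s) (ht0 : t 0 = 0) (htlow : TruncationLEEuler t)
    (htup : EulerLETotal t) (hst : ∀ n, s n ≤ t n) (hlt : ∃ k, s k < t k)
    (hone : ∀ n, n ≠ 0 → 1 ≤ t n) {C : ℝ}
    (hsup : ∀ m n, m ≠ 0 → n ≠ 0 → t m * t n ≤ C * t (m + n)) :
    Tendsto (fun n => s n / t n) atTop (𝓝 0) := by
  have ht n : 0 ≤ t n := (hs n).trans (hst n)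
  have hC : 0 < C := pos_of_mul_pos_left
    (zero_lt_one.trans_le ((one_le_mul_of_one_le_of_one_le (hone 1 one_ne_zero)
      (hone 1 one_ne_zero)).trans (hsup 1 1 one_ne_zero one_ne_zero))) (ht _)
  have hpow_nonneg n : 0 ≤ t n * (1 / 10 : ℝ) ^ n := mul_nonneg (ht n) (by positivity)
  obtain ⟨ρ, hρ, hρC, hlarge⟩ := exists_radius_of_supermultiplicative hC
    (by norm_num : (0 : ℝ) < 1 / 10) ht0 (fun n hn => zero_lt_one.trans_le (hone n hn)) hsup
    (fun n => (single_le_sum (fun k _ => hpow_nonneg k) (self_mem_range_succ n)).trans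
      (sum_mul_tenth_pow_le ht ht0 htlow (n + 1)))
  have hρ1 : ρ < 1 := radius_lt_one ht ht0 htup hone hρC
  have hsum : Summable fun n => t n * ρ ^ n :=
    summable_of_sum_range_le (fun n => mul_nonneg (ht n) (by positivity))
      (sum_le_two_of_radius ht ht0 htup hρ hρ1.le hρC)
  obtain ⟨x, hρx, hx⟩ := exists_summable_beyond hs hs0 hslow ht0 htup hst hlt hρ hρ1 hsum
  refine squeeze_zero' (Eventually.of_forall fun n => div_nonneg (hs n) (ht n)) ?_
    (by simpa using hx.tendsto_atTop_zero.const_mul C⁻¹)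
  filter_upwards [hlarge x hρx, eventually_ne_atTop 0] with n hn hn0
  have htn := zero_lt_one.trans_le (hone n hn0)
  rw [div_le_iff₀ htn, inv_mul_eq_div, div_mul_eq_mul_div, le_div_iff₀ hC]
  nlinarith [mul_le_mul_of_nonneg_left hn.le (hs n)]

end RadiusComparison

/-! ### Isomorphism classes of finite graphs -/

/-- Isomorphism of graphs on the sets `Fin n`, which represent all finite graphs. -/
def graphIsoSetoid : Setoid (Σ n : ℕ, SimpleGraph (Fin n)) where
  r G H := Nonempty (G.2 ≃g H.2)
  iseqv := ⟨fun _ => ⟨Iso.refl⟩, fun ⟨e⟩ => ⟨e.symm⟩, fun ⟨e⟩ ⟨f⟩ => ⟨e.trans f⟩⟩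

/-- The isomorphism classes of finite graphs. Disjoint union makes them a commutative monoid. -/
def GraphClass : Type := Quotient graphIsoSetoid

lemma nonempty_iso_compl {V W : Type*} {G : SimpleGraph V} {H : SimpleGraph W} (e : G ≃g H) :
    Nonempty (Gᶜ ≃g Hᶜ) :=
  ⟨⟨e.toEquiv, by simp [compl_adj, e.map_adj_iff]⟩⟩

lemma nonempty_iso_sum_induce_compl {V : Type*} {G : SimpleGraph V} (s : Set V)
    (h : ∀ u ∈ s, ∀ v ∉ s, ¬G.Adj u v) : Nonempty (G.induce s ⊕g G.induce sᶜ ≃g G) := by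
  classical
  refine ⟨⟨Equiv.Set.sumCompl s, ?_⟩⟩
  rintro (⟨u, hu⟩ | ⟨u, hu⟩) (⟨v, hv⟩ | ⟨v, hv⟩)
  · simp
  · simpa using h u hu v hv
  · simpa using fun huv => h v hv u hu (G.adj_symm huv)
  · simp

lemma nonempty_iso_induce_image {V W : Type*} {G : SimpleGraph V} {H : SimpleGraph W}
    (f : G ↪g H) (s : Set V) : Nonempty (G.induce s ≃g H.induce (f '' s)) :=
  ⟨⟨Equiv.Set.image f s f.injective, f.map_rel_iff⟩⟩

namespace GraphClass

/-- The number of vertices of a class. -/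
noncomputable def order (γ : GraphClass) : ℕ := (Quotient.out γ).1

/-- A representative of a class. -/
noncomputable def graph (γ : GraphClass) : SimpleGraph (Fin γ.order) := (Quotient.out γ).2

/-- The isomorphism class of a finite graph. -/
noncomputable def mk {V : Type} [Finite V] (G : SimpleGraph V) : GraphClass :=
  Quotient.mk graphIsoSetoid ⟨Nat.card V, G.comap (Finite.equivFin V).symm⟩

variable {V W : Type} [Finite V] [Finite W] {G : SimpleGraph V} {H : SimpleGraph W}
  {α β γ : GraphClass}

lemma mk_eq_mk_iff : mk G = mk H ↔ Nonempty (G ≃g H) := by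
  have eG : G.comap (Finite.equivFin V).symm ≃g G := Iso.comap (Finite.equivFin V).symm G
  have eH : H.comap (Finite.equivFin W).symm ≃g H := Iso.comap (Finite.equivFin W).symm H
  refine Quotient.eq.trans ⟨fun ⟨e⟩ => ⟨(eG.symm.trans e).trans eH⟩, fun ⟨e⟩ =>
    ⟨(eG.trans e).trans eH.symm⟩⟩

lemma mk_graph (γ : GraphClass) : mk γ.graph = γ := by
  conv_rhs => rw [← Quotient.out_eq γ]
  exact Quotient.sound (s := graphIsoSetoid) ⟨Iso.comap (Finite.equivFin _).symm _⟩

lemma nonempty_graph_mk_iso (G : SimpleGraph V) : Nonempty ((mk G).graph ≃g G) :=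
  mk_eq_mk_iff.1 (mk_graph _)

lemma order_mk (G : SimpleGraph V) : (mk G).order = Nat.card V := by
  obtain ⟨e⟩ := nonempty_graph_mk_iso G
  simpa using Nat.card_congr e.toEquiv

lemma eq_mk_of_order_eq {n : ℕ} (h : γ.order = n) : ∃ G : SimpleGraph (Fin n), mk G = γ := by
  subst h
  exact ⟨γ.graph, γ.mk_graph⟩

lemma finite_setOf_order_lt (n : ℕ) : {γ : GraphClass | γ.order < n}.Finite := by
  refine (Set.finite_range fun G : Σ k : Fin n, SimpleGraph (Fin k) => mk G.2).subset ?_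
  exact fun γ hγ => ⟨⟨⟨γ.order, hγ⟩, γ.graph⟩, γ.mk_graph⟩

noncomputable instance : Add GraphClass := ⟨fun α β => mk (α.graph ⊕g β.graph)⟩

noncomputable instance : Zero GraphClass := ⟨mk (⊥ : SimpleGraph Empty)⟩

noncomputable instance : Compl GraphClass := ⟨fun γ => mk γ.graphᶜ⟩

lemma add_def (α β : GraphClass) : α + β = mk (α.graph ⊕g β.graph) := rfl

lemma zero_def : (0 : GraphClass) = mk (⊥ : SimpleGraph Empty) := rfl

lemma compl_def (γ : GraphClass) : γᶜ = mk γ.graphᶜ := rfl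

lemma mk_add_mk (G : SimpleGraph V) (H : SimpleGraph W) : mk G + mk H = mk (G ⊕g H) :=
  let ⟨e⟩ := nonempty_graph_mk_iso G
  let ⟨f⟩ := nonempty_graph_mk_iso H
  mk_eq_mk_iff.2 ⟨e.sumCongr f⟩

lemma compl_mk (G : SimpleGraph V) : (mk G)ᶜ = mk Gᶜ :=
  let ⟨e⟩ := nonempty_graph_mk_iso G
  mk_eq_mk_iff.2 (nonempty_iso_compl e)

noncomputable instance : AddCommMonoid GraphClass where
  add_assoc α β γ := by
    rw [← α.mk_graph, ← β.mk_graph, ← γ.mk_graph]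
    simp only [mk_add_mk, mk_eq_mk_iff]
    exact ⟨Iso.sumAssoc⟩
  add_comm α β := mk_eq_mk_iff.2 ⟨Iso.sumComm⟩
  zero_add γ := by
    rw [← γ.mk_graph, zero_def, mk_add_mk, mk_eq_mk_iff]
    exact ⟨⟨Equiv.emptySum _ _, by rintro (⟨⟨⟩⟩ | u) (⟨⟨⟩⟩ | v); simp⟩⟩
  add_zero γ := by
    rw [← γ.mk_graph, zero_def, mk_add_mk, mk_eq_mk_iff]
    exact ⟨⟨Equiv.sumEmpty _ _, by rintro (u | ⟨⟨⟩⟩) (v | ⟨⟨⟩⟩); simp⟩⟩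
  nsmul := nsmulRec

lemma compl_compl (γ : GraphClass) : γᶜᶜ = γ := by
  rw [← γ.mk_graph, compl_mk, compl_mk, _root_.compl_compl]

lemma compl_injective : Function.Injective (compl : GraphClass → GraphClass) :=
  Function.LeftInverse.injective compl_compl

lemma order_add (α β : GraphClass) : (α + β).order = α.order + β.order := by
  simp [add_def, order_mk]

lemma order_compl (γ : GraphClass) : γᶜ.order = γ.order := by
  simp [compl_def, order_mk]

lemma order_zero : (0 : GraphClass).order = 0 := by
  simp [zero_def, order_mk]

lemma order_nsmul (n : ℕ) (γ : GraphClass) : (n • γ).order = n * γ.order := by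
  induction n with
  | zero => simp [order_zero]
  | succ n ih => rw [succ_nsmul, order_add, ih, Nat.succ_mul]

lemma order_multiset_sum (m : Multiset GraphClass) : m.sum.order = (m.map order).sum := by
  induction m using Multiset.induction_on with
  | empty => simp [order_zero]
  | cons γ m ih => simp [order_add, ih]

lemma eq_of_order_eq_of_le_one (h : α.order = β.order) (hα : α.order ≤ 1) : α = β := by
  obtain ⟨G, hG⟩ := eq_mk_of_order_eq h
  have : Subsingleton (Fin β.order) := Fin.subsingleton_iff_le_one.2 (h ▸ hα)
  exact hG.symm.trans ((congrArg mk (Subsingleton.elim G β.graph)).trans β.mk_graph)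

lemma eq_zero_of_order_eq_zero (h : γ.order = 0) : γ = 0 :=
  eq_of_order_eq_of_le_one (h.trans order_zero.symm) (h.trans_le zero_le_one)

/-- A class is connected if its members are connected graphs; in particular it is nonempty. -/
def IsConnected (γ : GraphClass) : Prop := γ.graph.Connected

lemma isConnected_mk : (mk G).IsConnected ↔ G.Connected :=
  (nonempty_graph_mk_iso G).some.connected_iff

lemma IsConnected.order_ne_zero (h : γ.IsConnected) : γ.order ≠ 0 := by
  have := h.nonempty
  exact (Fin.pos_iff_nonempty.2 this).ne'

lemma exists_eq_add_of_not_isConnected (h : ¬γ.IsConnected) (h0 : γ.order ≠ 0) :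
    ∃ α β : GraphClass, α.order ≠ 0 ∧ β.order ≠ 0 ∧ γ = α + β := by
  have : Nonempty (Fin γ.order) := Fin.pos_iff_nonempty.1 (Nat.pos_of_ne_zero h0)
  have hpre : ¬γ.graph.Preconnected := fun hpre => h ⟨hpre⟩
  obtain ⟨u, v, huv⟩ : ∃ u v, ¬γ.graph.Reachable u v := by simpa [Preconnected] using hpre
  set s := {w | γ.graph.Reachable u w}
  have hs : Nonempty s := ⟨u, Reachable.refl u⟩
  have hs' : Nonempty ↥sᶜ := ⟨v, huv⟩
  refine ⟨mk (γ.graph.induce s), mk (γ.graph.induce sᶜ), ?_, ?_, ?_⟩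
  · rw [order_mk]; exact Nat.card_pos.ne'
  · rw [order_mk]; exact Nat.card_pos.ne'
  · obtain ⟨e⟩ := nonempty_iso_sum_induce_compl s
      fun a ha b hb hab => hb (ha.trans hab.reachable)
    rw [mk_add_mk, mk_eq_mk_iff.2 ⟨e⟩, mk_graph]

lemma not_isConnected_add (hα : α.order ≠ 0) (hβ : β.order ≠ 0) : ¬(α + β).IsConnected := by
  have := Fin.pos_iff_nonempty.1 (Nat.pos_of_ne_zero hα)
  have := Fin.pos_iff_nonempty.1 (Nat.pos_of_ne_zero hβ)
  rw [add_def, isConnected_mk]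
  exact not_connected_sum

lemma isConnected_or_compl (h : γ.order ≠ 0) : γ.IsConnected ∨ γᶜ.IsConnected := by
  have := Fin.pos_iff_nonempty.1 (Nat.pos_of_ne_zero h)
  rw [compl_def, isConnected_mk]
  exact connected_or_connected_compl γ.graph

lemma isConnected_compl_add (hα : α.order ≠ 0) (hβ : β.order ≠ 0) : (α + β)ᶜ.IsConnected :=
  (isConnected_or_compl (by rw [order_add]; omega)).resolve_left (not_isConnected_add hα hβ)

lemma isConnected_of_order_eq_one (h : γ.order = 1) : γ.IsConnected := by
  have h0 : γ.order ≠ 0 := by omega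
  rcases isConnected_or_compl h0 with hγ | hγ
  · exact hγ
  · rwa [eq_of_order_eq_of_le_one γ.order_compl (by rw [order_compl, h])] at hγ

/-- The classes of the connected components, with multiplicity. -/
noncomputable def components (γ : GraphClass) : Multiset GraphClass :=
  letI := Fintype.ofFinite γ.graph.ConnectedComponent
  (Finset.univ : Finset γ.graph.ConnectedComponent).val.map fun c => mk (γ.graph.induce c.supp)

lemma components_mk_eq_map {ι : Type} [Fintype ι] (π : V → ι)
    (hadj : ∀ u v, G.Adj u v → π u = π v) (hconn : ∀ i, (G.induce {v | π v = i}).Connected) :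
    (mk G).components = (Finset.univ : Finset ι).val.map fun i => mk (G.induce {v | π v = i}) := by
  classical
  let _ := Fintype.ofFinite (mk G).graph.ConnectedComponent
  obtain ⟨e⟩ := nonempty_graph_mk_iso G
  have hreach u v : (mk G).graph.Reachable u v ↔ π (e u) = π (e v) := by
    rw [← e.reachable_iff]
    constructor
    · generalize e u = a, e v = b
      rintro ⟨p⟩
      induction p with
      | nil => rfl
      | cons h _ ih => exact (hadj _ _ h).trans ih
    · intro h
      exact ((hconn _).preconnected ⟨e u, h⟩ ⟨e v, rfl⟩).map (Embedding.induce _).toHom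
  let f : (mk G).graph.ConnectedComponent → ι :=
    Quot.lift (fun v => π (e v)) fun u v => (hreach u v).1
  have hf : Function.Bijective f := by
    constructor
    · rintro ⟨u⟩ ⟨v⟩ h
      exact ConnectedComponent.sound ((hreach u v).2 h)
    · intro i
      obtain ⟨v, hv⟩ := (hconn i).nonempty
      exact ⟨(mk G).graph.connectedComponentMk (e.symm v),
        (congrArg π (e.apply_symm_apply v)).trans hv⟩
  have hmk c : mk ((mk G).graph.induce c.supp) = mk (G.induce {v | π v = f c}) := by
    rcases c with ⟨w⟩
    refine mk_eq_mk_iff.2 ⟨⟨e.toEquiv.subtypeEquiv fun v => ?_, e.map_rel_iff⟩⟩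
    exact ConnectedComponent.eq.trans (hreach v w)
  rw [← Finset.map_univ_equiv (Equiv.ofBijective f hf), Finset.map_val, Multiset.map_map]
  exact Multiset.map_congr rfl fun c _ => hmk c

lemma isConnected_of_mem_components (h : α ∈ γ.components) : α.IsConnected := by
  obtain ⟨c, -, rfl⟩ := Multiset.mem_map.1 h
  exact isConnected_mk.2 c.connected_toSimpleGraph

lemma components_zero : (0 : GraphClass).components = 0 := by
  rw [zero_def, components_mk_eq_map (ι := Empty) id] <;> simp

lemma IsConnected.components_eq (h : γ.IsConnected) : γ.components = {γ} := by
  have e : γ.graph ≃g γ.graph.induce {v | (fun _ => () : Fin γ.order → Unit) v = ()} :=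
    ⟨(Equiv.subtypeUnivEquiv fun _ => rfl).symm, Iff.rfl⟩
  conv_lhs => rw [← γ.mk_graph]
  rw [components_mk_eq_map (fun _ => ()) (fun _ _ _ => rfl) fun _ => e.connected_iff.1 h]
  simp only [Finset.univ_unique, Finset.singleton_val, Multiset.map_singleton]
  exact congrArg _ ((mk_eq_mk_iff.2 ⟨e⟩).symm.trans γ.mk_graph)

lemma components_add (α β : GraphClass) : (α + β).components = α.components + β.components := by
  let _ := Fintype.ofFinite α.graph.ConnectedComponent
  let _ := Fintype.ofFinite β.graph.ConnectedComponent
  let π : Fin α.order ⊕ Fin β.order → α.graph.ConnectedComponent ⊕ β.graph.ConnectedComponent :=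
    Sum.map α.graph.connectedComponentMk β.graph.connectedComponentMk
  have left c : Nonempty (α.graph.induce c.supp ≃g
      (α.graph ⊕g β.graph).induce {v | π v = Sum.inl c}) := by
    rw [show {v | π v = Sum.inl c} = Embedding.sumInl '' c.supp by ext (v | v) <;> simp [π]]
    exact nonempty_iso_induce_image Embedding.sumInl c.supp
  have right c : Nonempty (β.graph.induce c.supp ≃g
      (α.graph ⊕g β.graph).induce {v | π v = Sum.inr c}) := by
    rw [show {v | π v = Sum.inr c} = Embedding.sumInr '' c.supp by ext (v | v) <;> simp [π]]
    exact nonempty_iso_induce_image Embedding.sumInr c.supp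
  rw [add_def, components_mk_eq_map π]
  · rw [show (Finset.univ : Finset (α.graph.ConnectedComponent ⊕ β.graph.ConnectedComponent)).val =
      Finset.univ.val.map Sum.inl + Finset.univ.val.map Sum.inr from rfl, Multiset.map_add,
      Multiset.map_map, Multiset.map_map]
    exact congrArg₂ _ (Multiset.map_congr rfl fun c _ => (mk_eq_mk_iff.2 (left c)).symm)
      (Multiset.map_congr rfl fun c _ => (mk_eq_mk_iff.2 (right c)).symm)
  · rintro (u | u) (v | v) h
    · exact congrArg Sum.inl (ConnectedComponent.sound (sum_adj_inl.1 h).reachable)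
    · simp at h
    · simp at h
    · exact congrArg Sum.inr (ConnectedComponent.sound (sum_adj_inr.1 h).reachable)
  · rintro (c | c)
    · exact (left c).some.connected_iff.1 c.connected_toSimpleGraph
    · exact (right c).some.connected_iff.1 c.connected_toSimpleGraph

lemma sum_components (γ : GraphClass) : γ.components.sum = γ := by
  induction hn : γ.order using Nat.strong_induction_on generalizing γ with | _ n ih =>
  rcases eq_or_ne γ.order 0 with h0 | h0
  · rw [eq_zero_of_order_eq_zero h0, components_zero, Multiset.sum_zero]
  by_cases hγ : γ.IsConnected
  · rw [hγ.components_eq, Multiset.sum_singleton]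
  obtain ⟨α, β, hα, hβ, rfl⟩ := exists_eq_add_of_not_isConnected hγ h0
  rw [order_add] at hn
  rw [components_add, Multiset.sum_add, ih _ (by omega) α rfl, ih _ (by omega) β rfl]

lemma components_injective : Function.Injective components :=
  Function.LeftInverse.injective sum_components

lemma components_multiset_sum {m : Multiset GraphClass} (hm : ∀ γ ∈ m, γ.IsConnected) :
    m.sum.components = m := by
  induction m using Multiset.induction_on with
  | empty => simp [components_zero]
  | cons γ m ih =>
    rw [Multiset.sum_cons, components_add, (hm γ (Multiset.mem_cons_self γ m)).components_eq,
      ih fun δ hδ => hm δ (Multiset.mem_cons_of_mem hδ), Multiset.singleton_add]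

instance : IsCancelAdd GraphClass :=
  have add_left_cancel : IsLeftCancelAdd GraphClass := ⟨fun γ α β h => components_injective <| by
    simpa [components_add] using congrArg components h⟩
  AddCommMagma.IsLeftCancelAdd.toIsCancelAdd GraphClass

end GraphClass

/-! ### Cographs -/

lemma exists_adj_boundary {V : Type*} {G : SimpleGraph V} (hG : G.Connected) {s : Set V} {u v : V}
    (hu : u ∈ s) (hv : v ∉ s) : ∃ a ∈ s, ∃ b ∉ s, G.Adj a b := by
  obtain ⟨p⟩ := hG.preconnected u v
  obtain ⟨d, -, hd, hd'⟩ := p.exists_boundary_dart s hu hv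
  exact ⟨d.fst, hd, d.snd, hd', d.adj⟩

section Cograph

variable {V W : Type} {G : SimpleGraph V} {H : SimpleGraph W}

lemma isCograph_iff_forall_walk : IsCograph G ↔
    ∀ a b c d, G.Adj a b → G.Adj b c → G.Adj c d → G.Adj a c ∨ G.Adj b d ∨ G.Adj a d := by
  constructor
  · intro h a b c d hab hbc hcd
    by_contra! ⟨hac, hbd, had⟩
    have nac : a ≠ c := by rintro rfl; exact had hcd
    have nad : a ≠ d := by rintro rfl; exact hac hcd.symm
    have nbd : b ≠ d := by rintro rfl; exact had hab
    refine h ⟨⟨![a, b, c, d], fun i j => ?_⟩, fun i j => ?_⟩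
    · fin_cases i <;> fin_cases j <;> simp [hab.ne, hbc.ne, hcd.ne, nac, nad, nbd, hab.ne',
        hbc.ne', hcd.ne', nac.symm, nad.symm, nbd.symm]
    · change G.Adj (![a, b, c, d] i) (![a, b, c, d] j) ↔ _
      fin_cases i <;> fin_cases j <;>
        simp [pathGraph_adj, hab, hbc, hcd, hac, hbd, had, G.adj_comm b a, G.adj_comm c b,
          G.adj_comm d c, G.adj_comm c a, G.adj_comm d b, G.adj_comm d a]
  · rintro h ⟨f, hf⟩
    have := h (f 0) (f 1) (f 2) (f 3)
    simp [hf, pathGraph_adj] at this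

namespace IsCograph

lemma of_embedding (f : G ↪g H) (h : IsCograph H) : IsCograph G := by
  rw [isCograph_iff_forall_walk] at h ⊢
  intro a b c d
  simpa only [f.map_adj_iff] using h (f a) (f b) (f c) (f d)

protected lemma compl (h : IsCograph G) : IsCograph Gᶜ := by
  rw [isCograph_iff_forall_walk] at h ⊢
  intro a b c d hab hbc hcd
  by_contra! ⟨hac, hbd, had⟩
  have adj {x y : V} (hxy : x ≠ y) (hG : ¬Gᶜ.Adj x y) : G.Adj x y := by
    simpa [compl_adj, hxy] using hG
  have nac : a ≠ c := by rintro rfl; exact had hcd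
  have nad : a ≠ d := by rintro rfl; exact hac hcd.symm
  have nbd : b ≠ d := by rintro rfl; exact had hab
  -- the complement of the path `a b c d` is the path `b d a c`
  have := h b d a c (adj nbd hbd) (adj nad had).symm (adj nac hac)
  simp only [compl_adj] at hab hbc hcd
  rw [G.adj_comm b a, G.adj_comm d c] at this
  tauto

lemma sum (hG : IsCograph G) (hH : IsCograph H) : IsCograph (G ⊕g H) := by
  rw [isCograph_iff_forall_walk] at hG hH ⊢
  rintro (a | a) (b | b) (c | c) (d | d) <;>
    simp only [sum_adj, false_imp_iff, implies_true]
  · exact hG a b c d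
  · exact hH a b c d

lemma connected_induce_compl_singleton [Nontrivial V] (h : IsCograph G) (hG : G.Connected)
    (hG' : Gᶜ.Connected) (v : V) : (G.induce {v}ᶜ).Connected := by
  rw [isCograph_iff_forall_walk] at h
  obtain ⟨u, hvu⟩ := hG'.preconnected.exists_adj_of_nontrivial v
  have hu : u ∈ ({v}ᶜ : Set V) := hvu.ne'
  by_contra hdisc
  set G' := G.induce {v}ᶜ
  have exists_neighbor (c : G'.ConnectedComponent) :
      ∃ w : ↥({v}ᶜ : Set V), G'.connectedComponentMk w = c ∧ G.Adj w v := by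
    obtain ⟨x, hx⟩ := c.exists_rep
    obtain ⟨_, ⟨w, hw, rfl⟩, b, hb, hwb⟩ := exists_adj_boundary hG
      (s := Subtype.val '' c.supp) (v := v) ⟨x, hx, rfl⟩ (by rintro ⟨w, -, hw⟩; exact w.2 hw)
    obtain rfl : b = v := by
      by_contra hbv
      have hadj : G'.Adj w ⟨b, hbv⟩ := hwb
      exact hb ⟨⟨b, hbv⟩, (ConnectedComponent.sound hadj.reachable).symm.trans hw, rfl⟩
    exact ⟨w, hw, hwb⟩
  set c := G'.connectedComponentMk ⟨u, hu⟩
  obtain ⟨c', hc'⟩ : ∃ c', c' ≠ c := by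
    by_contra! hall
    have : Nonempty ↥({v}ᶜ : Set V) := ⟨⟨u, hu⟩⟩
    exact hdisc ⟨fun x y => ConnectedComponent.exact ((hall _).trans (hall _).symm)⟩
  obtain ⟨d, hd, hdv⟩ := exists_neighbor c'
  obtain ⟨w, hw, hwv⟩ := exists_neighbor c
  obtain ⟨b, hbv, a, hav, hba⟩ := exists_adj_boundary c.connected_toSimpleGraph
    (s := {x | ¬G.Adj v x.1}) (u := ⟨⟨u, hu⟩, rfl⟩) (v := ⟨w, hw⟩) hvu.2 (not_not.2 hwv.symm)
  have not_adj {x : ↥({v}ᶜ : Set V)} (hx : x ∈ c.supp) : ¬G'.Adj d x := fun hdx =>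
    hc' (hd.symm.trans ((ConnectedComponent.sound hdx.reachable).trans hx))
  rcases h d v a b hdv (not_not.1 hav) (G.adj_symm hba) with had | hvb | hbd
  · exact not_adj a.2 had
  · exact hbv hvb
  · exact not_adj b.2 hbd

theorem not_connected_compl [Finite V] [Nontrivial V] (h : IsCograph G) (hG : G.Connected) :
    ¬Gᶜ.Connected := by
  intro hG'
  induction hn : Nat.card V using Nat.strong_induction_on generalizing V with | _ n ih =>
  obtain ⟨v, v', hv⟩ := exists_pair_ne V
  have hcompl : (G.induce {v}ᶜ)ᶜ = Gᶜ.induce {v}ᶜ := by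
    ext a b
    simp [Subtype.ext_iff]
  rcases subsingleton_or_nontrivial ↥({v}ᶜ : Set V) with hsub | hnontrivial
  · have adj {K : SimpleGraph V} (hK : K.Connected) : K.Adj v v' := by
      obtain ⟨b, hvb⟩ := hK.preconnected.exists_adj_of_nontrivial v
      have : (⟨b, hvb.ne'⟩ : ↥({v}ᶜ : Set V)) = ⟨v', hv.symm⟩ := Subsingleton.elim _ _
      rwa [Subtype.mk.inj this] at hvb
    exact ((compl_adj _ _ _).1 (adj hG')).2 (adj hG)
  · refine ih (Nat.card ↥({v}ᶜ : Set V)) ?_ (h.of_embedding (Embedding.induce _))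
      (h.connected_induce_compl_singleton hG hG' v) ?_ rfl
    · exact hn ▸ Finite.card_subtype_lt (x := v) (by simp)
    · rw [hcompl]
      exact h.compl.connected_induce_compl_singleton hG' (by rwa [compl_compl]) v

end IsCograph

end Cograph

namespace GraphClass

variable {α β γ : GraphClass}

/-- A class is a cograph class if its members are cographs. -/
def IsCographClass (γ : GraphClass) : Prop := IsCograph γ.graph

lemma isCographClass_mk {V : Type} [Finite V] {G : SimpleGraph V} :
    (mk G).IsCographClass ↔ IsCograph G := by
  obtain ⟨e⟩ := nonempty_graph_mk_iso G
  exact ⟨IsCograph.of_embedding e.symm.toEmbedding, IsCograph.of_embedding e.toEmbedding⟩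

lemma isCographClass_add : (α + β).IsCographClass ↔ α.IsCographClass ∧ β.IsCographClass := by
  rw [add_def, isCographClass_mk]
  exact ⟨fun h => ⟨h.of_embedding Embedding.sumInl, h.of_embedding Embedding.sumInr⟩,
    fun h => h.1.sum h.2⟩

lemma isCographClass_compl : γᶜ.IsCographClass ↔ γ.IsCographClass := by
  rw [compl_def, isCographClass_mk]
  exact ⟨fun h => by simpa [IsCographClass] using h.compl, IsCograph.compl⟩

lemma isCographClass_of_order_le_one (h : γ.order ≤ 1) : γ.IsCographClass := by
  rintro ⟨f, -⟩
  have := Fintype.card_le_of_embedding f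
  simp only [Fintype.card_fin] at this
  omega

lemma isCographClass_multiset_sum {m : Multiset GraphClass} :
    m.sum.IsCographClass ↔ ∀ γ ∈ m, γ.IsCographClass := by
  induction m using Multiset.induction_on with
  | empty => simpa using isCographClass_of_order_le_one (order_zero.trans_le zero_le_one)
  | cons γ m ih => simp [isCographClass_add, ih]

lemma IsCographClass.isConnected_compl_iff (h : γ.IsCographClass) (hγ : 2 ≤ γ.order) :
    γᶜ.IsConnected ↔ ¬γ.IsConnected := by
  have : Nontrivial (Fin γ.order) := Fin.nontrivial_iff_two_le.2 hγ
  refine ⟨fun hc hγ => ?_, (isConnected_or_compl (by omega)).resolve_left⟩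
  exact IsCograph.not_connected_compl h hγ (isConnected_mk.1 hc)

end GraphClass

/-! ### Regular similarity and switching -/

section RegularSimilarity

open Matrix

section AdjacencyMatrix

variable {V W : Type*}

open Classical in
/-- The real adjacency matrix, with the decidability choice made in `adjCharPoly`. -/
noncomputable def realAdjMatrix (G : SimpleGraph V) : Matrix V V ℝ := G.adjMatrix ℝ

lemma realAdjMatrix_transpose (G : SimpleGraph V) : (realAdjMatrix G)ᵀ = realAdjMatrix G :=
  letI := Classical.decRel G.Adj
  transpose_adjMatrix G

lemma realAdjMatrix_apply (G : SimpleGraph V) (u v : V) [Decidable (G.Adj u v)] :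
    realAdjMatrix G u v = if G.Adj u v then 1 else 0 := by
  rw [realAdjMatrix, adjMatrix_apply]
  congr

lemma realAdjMatrix_compl [DecidableEq V] (G : SimpleGraph V) :
    realAdjMatrix Gᶜ = vecMulVec 1 1 - 1 - realAdjMatrix G := by
  ext u v
  classical
  by_cases huv : u = v
  · simp [realAdjMatrix_apply, huv]
  · by_cases h : G.Adj u v <;> simp [realAdjMatrix_apply, huv, h]

lemma realAdjMatrix_sum (G : SimpleGraph V) (H : SimpleGraph W) :
    realAdjMatrix (G ⊕g H) = fromBlocks (realAdjMatrix G) 0 0 (realAdjMatrix H) := by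
  classical
  ext (u | u) (v | v) <;> simp [realAdjMatrix_apply]

lemma realAdjMatrix_eq_submatrix {G : SimpleGraph V} {H : SimpleGraph W} (e : G ≃g H) :
    realAdjMatrix G = (realAdjMatrix H).submatrix e e := by
  classical
  ext u v
  simp [realAdjMatrix_apply, e.map_adj_iff]

/-- The graph `G` together with a new vertex adjacent to the vertices in `s`. -/
def addApex (G : SimpleGraph V) (s : Set V) : SimpleGraph (V ⊕ Unit) where
  Adj
    | Sum.inl u, Sum.inl v => G.Adj u v
    | Sum.inl u, Sum.inr _ => u ∈ s
    | Sum.inr _, Sum.inl v => v ∈ s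
    | Sum.inr _, Sum.inr _ => False
  symm := ⟨by rintro (u | _) (v | _) <;> simp [G.adj_comm]⟩
  loopless := ⟨by rintro (u | _) <;> simp⟩

lemma realAdjMatrix_addApex (G : SimpleGraph V) (s : Set V) :
    realAdjMatrix (addApex G s) = fromBlocks (realAdjMatrix G)
      (replicateCol Unit (s.indicator 1)) (replicateRow Unit (s.indicator 1)) 0 := by
  classical
  ext (u | u) (v | v) <;> simp [realAdjMatrix_apply, addApex, Set.indicator_apply]

end AdjacencyMatrix

section Similarity

variable {V W X V' W' : Type} [Fintype V] [DecidableEq V] [Fintype W] [DecidableEq W]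
  [Fintype X] [DecidableEq X] [Fintype V'] [DecidableEq V'] [Fintype W'] [DecidableEq W']
  {G : SimpleGraph V} {H : SimpleGraph W} {K : SimpleGraph X}
  {G' : SimpleGraph V'} {H' : SimpleGraph W'}

/-- Two graphs are regularly similar if their adjacency matrices are similar by a matrix `Q` all of
whose row and column sums are `1`. Then `Q` also intertwines the adjacency matrices of the
complements, so regularly similar graphs are generalized cospectral. -/
def RegularlySimilar (G : SimpleGraph V) (H : SimpleGraph W) : Prop :=
  ∃ (Q : Matrix W V ℝ) (Q' : Matrix V W ℝ), Q * Q' = 1 ∧ Q' * Q = 1 ∧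
    Q * realAdjMatrix G = realAdjMatrix H * Q ∧ Q *ᵥ 1 = 1 ∧ 1 ᵥ* Q = 1

namespace RegularlySimilar

lemma of_iso (e : G ≃g H) : RegularlySimilar G H := by
  refine ⟨(1 : Matrix W W ℝ).submatrix id e, (1 : Matrix W W ℝ).submatrix e id, ?_, ?_, ?_, ?_, ?_⟩
  · exact (submatrix_mul_equiv 1 1 id e.toEquiv id).trans (by simp)
  · rw [← Equiv.coe_refl, submatrix_mul_equiv, mul_one]
    exact submatrix_one_equiv e.toEquiv
  · rw [realAdjMatrix_eq_submatrix e]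
    refine (submatrix_mul_equiv 1 (realAdjMatrix H) id e.toEquiv e).trans ?_
    rw [Matrix.one_mul]
    exact ((realAdjMatrix H).mul_submatrix_one (Equiv.refl W) e).symm
  · exact (submatrix_mulVec_equiv 1 1 id e.toEquiv).trans (one_mulVec _)
  · refine (submatrix_vecMul_equiv 1 1 (Equiv.refl W) e).trans ?_
    rw [vecMul_one]
    rfl

lemma trans (h : RegularlySimilar G H) (h' : RegularlySimilar H K) : RegularlySimilar G K := by
  obtain ⟨Q, Q', h₁, h₂, hA, hr, hc⟩ := h
  obtain ⟨P, P', h₁', h₂', hA', hr', hc'⟩ := h'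
  refine ⟨P * Q, Q' * P', ?_, ?_, ?_, ?_, ?_⟩
  · rw [Matrix.mul_assoc, ← Matrix.mul_assoc Q, h₁, Matrix.one_mul, h₁']
  · rw [Matrix.mul_assoc, ← Matrix.mul_assoc P', h₂', Matrix.one_mul, h₂]
  · rw [Matrix.mul_assoc, hA, ← Matrix.mul_assoc, hA', Matrix.mul_assoc]
  · rw [← mulVec_mulVec, hr, hr']
  · rw [← vecMul_vecMul, hc', hc]

lemma card_eq (h : RegularlySimilar G H) : Fintype.card V = Fintype.card W := by
  obtain ⟨Q, Q', h₁, h₂, -⟩ := h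
  have := trace_mul_comm Q Q'
  rw [h₁, h₂, trace_one, trace_one] at this
  exact_mod_cast this.symm

lemma cospectral (h : RegularlySimilar G H) : Cospectral G H := by
  have hcard := h.card_eq
  obtain ⟨Q, Q', h₁, h₂, hA, -⟩ := h
  calc (realAdjMatrix G).charpoly
      = (Q' * (Q * realAdjMatrix G)).charpoly := by rw [← Matrix.mul_assoc, h₂, Matrix.one_mul]
    _ = (Q * realAdjMatrix G * Q').charpoly := by
      rw [charpoly_mul_comm_of_le _ _ hcard.ge, hcard, Nat.sub_self, pow_zero, one_mul]
    _ = (realAdjMatrix H).charpoly := by rw [hA, Matrix.mul_assoc, h₁, Matrix.mul_one]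

protected lemma compl (h : RegularlySimilar G H) : RegularlySimilar Gᶜ Hᶜ := by
  obtain ⟨Q, Q', h₁, h₂, hA, hr, hc⟩ := h
  refine ⟨Q, Q', h₁, h₂, ?_, hr, hc⟩
  simp only [realAdjMatrix_compl, Matrix.mul_sub, Matrix.sub_mul, mul_vecMulVec, vecMulVec_mul, hr,
    hc, hA, Matrix.mul_one, Matrix.one_mul]

lemma genCospectral (h : RegularlySimilar G H) : GenCospectral G H :=
  ⟨h.cospectral, h.compl.cospectral⟩

lemma sum (h : RegularlySimilar G H) (h' : RegularlySimilar G' H') :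
    RegularlySimilar (G ⊕g G') (H ⊕g H') := by
  obtain ⟨Q, Q', h₁, h₂, hA, hr, hc⟩ := h
  obtain ⟨P, P', h₁', h₂', hA', hr', hc'⟩ := h'
  refine ⟨fromBlocks Q 0 0 P, fromBlocks Q' 0 0 P', ?_, ?_, ?_, ?_, ?_⟩
  · simp [fromBlocks_multiply, h₁, h₁']
  · simp [fromBlocks_multiply, h₂, h₂']
  · simp [realAdjMatrix_sum, fromBlocks_multiply, hA, hA']
  · simp [fromBlocks_mulVec, hr, hr']
  · simp [vecMul_fromBlocks, hc, hc']

end RegularlySimilar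

section Switching

/-- The matrix of Godsil and McKay: the reflection `J / m - 1`. On a set of `2 * m` vertices it
fixes the all-ones vector and maps the indicator vector of each half to that of the other half. -/
noncomputable def switchingMatrix (V : Type*) [DecidableEq V] (m : ℝ) : Matrix V V ℝ :=
  m⁻¹ • vecMulVec 1 1 - 1

lemma switchingMatrix_mulVec (m : ℝ) (x : V → ℝ) :
    switchingMatrix V m *ᵥ x = (m⁻¹ * (1 ⬝ᵥ x)) • 1 - x := by
  rw [switchingMatrix, sub_mulVec, smul_mulVec, vecMulVec_mulVec, one_mulVec, op_smul_eq_smul,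
    smul_smul]

lemma switchingMatrix_mul_self {m : ℝ} (h : switchingMatrix V m *ᵥ 1 = 1) :
    switchingMatrix V m * switchingMatrix V m = 1 := by
  nth_rw 2 [switchingMatrix]
  rw [Matrix.mul_sub, Matrix.mul_smul, mul_vecMulVec, h, Matrix.mul_one, switchingMatrix,
    sub_sub_cancel]

lemma commute_switchingMatrix {r : ℝ} (hG : realAdjMatrix G *ᵥ 1 = r • 1) (m : ℝ) :
    switchingMatrix V m * realAdjMatrix G = realAdjMatrix G * switchingMatrix V m := by
  rw [switchingMatrix, Matrix.sub_mul, Matrix.mul_sub, Matrix.smul_mul, Matrix.mul_smul,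
    mul_vecMulVec, vecMulVec_mul, ← mulVec_transpose, realAdjMatrix_transpose, hG, Matrix.one_mul,
    Matrix.mul_one, smul_vecMulVec, vecMulVec_smul]

theorem regularlySimilar_addApex_compl {r : ℝ} {s : Finset V} (hG : realAdjMatrix G *ᵥ 1 = r • 1)
    (hs : 2 * s.card = Fintype.card V) : RegularlySimilar (addApex G s) (addApex G (↑s)ᶜ) := by
  rcases isEmpty_or_nonempty V with hV | hV
  · rw [Subsingleton.elim (↑s)ᶜ (s : Set V)]
    exact .of_iso Iso.refl
  have hm : (s.card : ℝ) ≠ 0 := by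
    have := Fintype.card_pos (α := V)
    exact_mod_cast (by omega : s.card ≠ 0)
  set x : V → ℝ := (s : Set V).indicator 1
  have hx : (s : Set V)ᶜ.indicator 1 = 1 - x := Set.indicator_compl _ _
  have hsum : 1 ⬝ᵥ x = s.card := by
    simp [x, dotProduct, Set.indicator_apply]
  have hcard : (1 : V → ℝ) ⬝ᵥ 1 = 2 * s.card := by
    simp [← hs]
  set P := switchingMatrix V s.card
  have hP : Pᵀ = P := by
    simp only [P, switchingMatrix, transpose_sub, transpose_smul, transpose_vecMulVec,
      transpose_one]
  have hP1 : P *ᵥ 1 = 1 := by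
    rw [switchingMatrix_mulVec, hcard, mul_left_comm, inv_mul_cancel₀ hm]
    module
  have hPx : P *ᵥ x = 1 - x := by
    rw [switchingMatrix_mulVec, hsum, inv_mul_cancel₀ hm, one_smul]
  have hPx' : P *ᵥ (1 - x) = x := by rw [mulVec_sub, hP1, hPx, sub_sub_cancel]
  have h1P : 1 ᵥ* P = 1 := by rw [← mulVec_transpose, hP, hP1]
  have hPP : P * P = 1 := switchingMatrix_mul_self hP1
  have hPA : P * realAdjMatrix G = realAdjMatrix G * P := commute_switchingMatrix hG _
  refine ⟨fromBlocks P 0 0 1, fromBlocks P 0 0 1, ?_, ?_, ?_, ?_, ?_⟩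
  · simp [fromBlocks_multiply, hPP]
  · simp [fromBlocks_multiply, hPP]
  · rw [realAdjMatrix_addApex, realAdjMatrix_addApex, hx, fromBlocks_multiply, fromBlocks_multiply,
      hPA, ← replicateCol_mulVec, ← replicateRow_vecMul, hPx,
      ← mulVec_transpose, hP, hPx']
    simp [x]
  · simp [fromBlocks_mulVec, hP1]
  · simp [vecMul_fromBlocks, h1P]

end Switching

end Similarity

namespace GraphClass

variable {V W : Type} {G : SimpleGraph V} {H : SimpleGraph W} {α β γ δ : GraphClass}

section HasRegularMate

/-- A class has a regular mate if its graphs are regularly similar to nonisomorphic graphs. -/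
def HasRegularMate (γ : GraphClass) : Prop := ∃ δ ≠ γ, RegularlySimilar γ.graph δ.graph

lemma regularlySimilar_graph [Fintype V] [DecidableEq V] [Fintype W] [DecidableEq W]
    (hG : mk G = γ) (hH : mk H = δ) (h : RegularlySimilar G H) :
    RegularlySimilar γ.graph δ.graph := by
  subst hG hH
  obtain ⟨e⟩ := nonempty_graph_mk_iso G
  obtain ⟨f⟩ := nonempty_graph_mk_iso H
  exact ((RegularlySimilar.of_iso e).trans h).trans (.of_iso f.symm)

lemma HasRegularMate.compl (h : γ.HasRegularMate) : γᶜ.HasRegularMate := by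
  obtain ⟨δ, hne, h⟩ := h
  exact ⟨δᶜ, compl_injective.ne hne, regularlySimilar_graph rfl rfl h.compl⟩

lemma HasRegularMate.add (h : α.HasRegularMate) (β : GraphClass) : (α + β).HasRegularMate := by
  obtain ⟨δ, hne, h⟩ := h
  exact ⟨δ + β, (add_left_injective β).ne hne,
    regularlySimilar_graph rfl rfl (h.sum (.of_iso Iso.refl))⟩

lemma HasRegularMate.one_lt_order (h : γ.HasRegularMate) : 1 < γ.order := by
  obtain ⟨δ, hne, h⟩ := h
  by_contra! hγ
  exact hne (eq_of_order_eq_of_le_one (by simpa using h.card_eq) hγ).symm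

end HasRegularMate

section IsRegular

/-- A class is `r`-regular if the rows of the adjacency matrices of its graphs sum to `r`. -/
def IsRegular (γ : GraphClass) (r : ℝ) : Prop := realAdjMatrix γ.graph *ᵥ 1 = r • 1

lemma isRegular_mk [Fintype V] {r : ℝ} : (mk G).IsRegular r ↔ realAdjMatrix G *ᵥ 1 = r • 1 := by
  obtain ⟨e⟩ := nonempty_graph_mk_iso G
  rw [IsRegular, realAdjMatrix_eq_submatrix e]
  refine (Eq.congr_left (submatrix_mulVec_equiv (realAdjMatrix G) 1 e e.toEquiv)).trans ?_
  exact e.surjective.injective_comp_right.eq_iff (b := r • 1)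

/-- The one-vertex graph. -/
noncomputable def point : GraphClass := mk (⊥ : SimpleGraph Unit)

lemma order_point : point.order = 1 := by
  simp [point, order_mk]

lemma isRegular_point : point.IsRegular 0 := by
  rw [point, isRegular_mk]
  ext
  simp [realAdjMatrix]

lemma isRegular_zero (r : ℝ) : IsRegular 0 r := by
  rw [zero_def, isRegular_mk]
  exact Subsingleton.elim _ _

lemma IsRegular.add {r : ℝ} (hα : α.IsRegular r) (hβ : β.IsRegular r) : (α + β).IsRegular r := by
  rw [add_def, isRegular_mk, realAdjMatrix_sum, fromBlocks_mulVec, zero_mulVec, zero_mulVec,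
    add_zero, zero_add, Pi.one_comp, Pi.one_comp, hα, hβ]
  ext (v | v) <;> simp

lemma IsRegular.nsmul {r : ℝ} (hγ : γ.IsRegular r) (n : ℕ) : (n • γ).IsRegular r := by
  induction n with
  | zero => rw [zero_nsmul]; exact isRegular_zero r
  | succ n ih => rw [succ_nsmul]; exact ih.add hγ

lemma IsRegular.compl {r : ℝ} (h : γ.IsRegular r) : γᶜ.IsRegular (γ.order - 1 - r) := by
  rw [compl_def, isRegular_mk, realAdjMatrix_compl, sub_mulVec, sub_mulVec, vecMulVec_mulVec, h,
    one_mulVec]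
  ext v
  simp

/-- The graph obtained by adding a vertex adjacent to all vertices. -/
noncomputable def cone (γ : GraphClass) : GraphClass := (γᶜ + point)ᶜ

lemma order_cone : γ.cone.order = γ.order + 1 := by
  rw [cone, order_compl, order_add, order_compl, order_point]

lemma mk_addApex_range_inl [Finite V] [Finite W] (G : SimpleGraph V) (H : SimpleGraph W) :
    mk (addApex (G ⊕g H) (Set.range Sum.inl)) = (mk G).cone + mk H := by
  rw [cone, point, compl_mk, mk_add_mk, compl_mk, mk_add_mk, mk_eq_mk_iff]
  refine ⟨⟨(Equiv.sumAssoc V W Unit).trans <| (Equiv.sumCongr (Equiv.refl V)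
    (Equiv.sumComm W Unit)).trans (Equiv.sumAssoc V Unit W).symm, ?_⟩⟩
  have adj_iff u v : u ≠ v ∧ (u ≠ v → G.Adj u v) ↔ G.Adj u v :=
    ⟨fun h => h.2 h.1, fun h => ⟨h.ne, fun _ => h⟩⟩
  rintro ((u | u) | u) ((v | v) | v) <;> simp [addApex, compl_adj, adj_iff]

lemma mk_addApex_preimage [Finite V] [Finite W] (e : G ≃g H) (s : Set W) :
    mk (addApex G (e ⁻¹' s)) = mk (addApex H s) := by
  refine mk_eq_mk_iff.2 ⟨⟨e.toEquiv.sumCongr (Equiv.refl Unit), ?_⟩⟩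
  rintro (u | u) (v | v) <;> simp [addApex, e.map_adj_iff]

theorem regularlySimilar_cone_add {r : ℝ} (hγ : γ.IsRegular r) (hδ : δ.IsRegular r)
    (h : γ.order = δ.order) : RegularlySimilar (γ.cone + δ).graph (δ.cone + γ).graph := by
  let s : Finset (Fin γ.order ⊕ Fin δ.order) := Finset.univ.map Function.Embedding.inl
  have hs : (s : Set (Fin γ.order ⊕ Fin δ.order)) = Set.range Sum.inl := by simp [s]
  have hs' : (s : Set (Fin γ.order ⊕ Fin δ.order))ᶜ =
      (Iso.sumComm : γ.graph ⊕g δ.graph ≃g δ.graph ⊕g γ.graph) ⁻¹' Set.range Sum.inl := by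
    ext (v | v) <;> simp [hs]
  refine regularlySimilar_graph ?_ ?_ (regularlySimilar_addApex_compl (s := s)
    (isRegular_mk.1 (hγ.add hδ)) (by simp [s, h, two_mul]))
  · rw [hs, mk_addApex_range_inl, mk_graph, mk_graph]
  · rw [hs', mk_addApex_preimage, mk_addApex_range_inl, mk_graph, mk_graph]

lemma isConnected_cone (h : γ.order ≠ 0) : γ.cone.IsConnected :=
  isConnected_compl_add (by rwa [order_compl]) (by simp [order_point])

lemma cone_add_nsmul_ne {m n : ℕ} (hα : α.IsConnected) (hβ : β.IsConnected) (hm : m ≠ 0)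
    (hn : n ≠ 0) (hmn : m ≠ n) : (m • α).cone + n • β ≠ (n • β).cone + m • α := by
  have card_components {α β : GraphClass} {m n : ℕ} (hα : α.IsConnected) (hβ : β.IsConnected)
      (hm : m ≠ 0) : ((m • α).cone + n • β).components.card = n + 1 := by
    have hcone : (m • α).cone.IsConnected :=
      isConnected_cone (by rw [order_nsmul]; exact mul_ne_zero hm hα.order_ne_zero)
    rw [components_add, hcone.components_eq, ← Multiset.sum_replicate n, components_multiset_sum,
      Multiset.card_add, Multiset.card_singleton, Multiset.card_replicate, add_comm]
    exact fun γ hγ => Multiset.eq_of_mem_replicate hγ ▸ hβ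
  intro h
  have := congrArg (fun γ => γ.components.card) h
  simp only [card_components hα hβ hm, card_components hβ hα hn] at this
  omega

lemma isCographClass_nsmul {n : ℕ} (h : γ.IsCographClass) : (n • γ).IsCographClass := by
  rw [← Multiset.sum_replicate, isCographClass_multiset_sum]
  exact fun δ hδ => Multiset.eq_of_mem_replicate hδ ▸ h

lemma isCographClass_point : point.IsCographClass :=
  isCographClass_of_order_le_one order_point.le

lemma isCographClass_cone (h : γ.IsCographClass) : γ.cone.IsCographClass :=
  isCographClass_compl.2 (isCographClass_add.2 ⟨isCographClass_compl.2 h, isCographClass_point⟩)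

theorem exists_isConnected_isCographClass_hasRegularMate :
    ∃ γ : GraphClass, γ.IsConnected ∧ γ.IsCographClass ∧ γ.HasRegularMate := by
  let triangle := (3 • point)ᶜ
  let square := (2 • (2 • point)ᶜ)ᶜ
  have cograph_triangle : triangle.IsCographClass :=
    isCographClass_compl.2 (isCographClass_nsmul isCographClass_point)
  have cograph_square : square.IsCographClass := isCographClass_compl.2 <|
    isCographClass_nsmul <| isCographClass_compl.2 <| isCographClass_nsmul isCographClass_point
  have order_triangle : triangle.order = 3 := by
    simp [triangle, order_compl, order_nsmul, order_point]
  have order_square : square.order = 4 := by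
    simp [square, order_compl, order_nsmul, order_point]
  have isRegular_triangle : triangle.IsRegular 2 := by
    convert (isRegular_point.nsmul 3).compl
    norm_num [order_nsmul, order_point]
  have isRegular_square : square.IsRegular 2 := by
    convert (((isRegular_point.nsmul 2).compl).nsmul 2).compl
    norm_num [order_nsmul, order_compl, order_point]
  have isConnected_triangle : triangle.IsConnected := by
    simp only [triangle, succ_nsmul]
    apply isConnected_compl_add <;> simp [order_add, order_point]
  have isConnected_square : square.IsConnected := by
    simp only [square, two_nsmul]
    apply isConnected_compl_add <;> simp [order_add, order_compl, order_point]
  have hasRegularMate : ((4 • triangle).cone + 3 • square).HasRegularMate := by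
    refine ⟨(3 • square).cone + 4 • triangle, (cone_add_nsmul_ne isConnected_triangle
      isConnected_square (by norm_num) (by norm_num) (by norm_num)).symm,
      regularlySimilar_cone_add (isRegular_triangle.nsmul 4) (isRegular_square.nsmul 3) ?_⟩
    rw [order_nsmul, order_nsmul, order_triangle, order_square]
  refine ⟨_, isConnected_compl_add ?_ ?_, isCographClass_compl.2 ?_, hasRegularMate.compl⟩
  · simp [order_cone]
  · simp [order_nsmul, order_square]
  · exact isCographClass_add.2 ⟨isCographClass_cone (isCographClass_nsmul cograph_triangle),
      isCographClass_nsmul cograph_square⟩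

end IsRegular

end GraphClass

end RegularSimilarity

/-! ### Counting by connected components -/

section EulerProduct

open Multiset

variable {ι : Type*} {F : Finset ι} {a : ι}

/-- The multisets on the finite set `F`. -/
abbrev MultisetOn (F : Finset ι) : Type _ := {m : Multiset ι // ∀ i ∈ m, i ∈ F}

/-- A multiset on `insert a F` consists of the copies of `a` and a multiset on `F`. -/
def multisetInsertEquiv [DecidableEq ι] (ha : a ∉ F) :
    ℕ × MultisetOn F ≃ MultisetOn (insert a F) where
  toFun p := ⟨replicate p.1 a + p.2.1, fun i hi => Finset.mem_insert.2 <|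
    (mem_add.1 hi).imp eq_of_mem_replicate (p.2.2 i)⟩
  invFun m := ⟨m.1.count a, m.1.filter (· ≠ a), fun i hi =>
    Finset.mem_of_mem_insert_of_ne (m.2 i (mem_of_mem_filter hi)) (mem_filter.1 hi).2⟩
  left_inv := by
    rintro ⟨n, m, hm⟩
    have ham : a ∉ m := fun h => ha (hm a h)
    have hfilter : m.filter (· ≠ a) = m := filter_eq_self.2 fun i hi => by rintro rfl; exact ham hi
    refine Prod.ext ?_ (Subtype.ext ?_)
    · simp [count_eq_zero_of_notMem ham]
    · simp only [filter_add, hfilter]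
      rw [filter_eq_nil.2 fun i hi => not_not.2 (eq_of_mem_replicate hi), zero_add]
  right_inv m := Subtype.ext <| by
    simp only [← filter_eq']
    exact filter_add_not _ _

lemma hasSum_multiset_pow (w : ι → ℕ) (hw : ∀ i ∈ F, w i ≠ 0) {x : ℝ} (hx0 : 0 ≤ x) (hx1 : x < 1) :
    HasSum (fun m : MultisetOn F => x ^ (m.1.map w).sum)
      (∏ i ∈ F, (1 - x ^ w i)⁻¹) := by
  classical
  induction F using Finset.induction_on with
  | empty =>
    have : Unique (MultisetOn (∅ : Finset ι)) :=
      ⟨⟨⟨0, by simp⟩⟩, fun m => Subtype.ext <| eq_zero_of_forall_notMem fun i hi =>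
        Finset.notMem_empty i (m.2 i hi)⟩
    convert hasSum_unique _
    rw [Finset.prod_empty, Subsingleton.elim default (⟨0, by simp⟩ : MultisetOn (∅ : Finset ι))]
    simp
  | insert a F ha ih =>
    specialize ih fun i hi => hw i (Finset.mem_insert_of_mem hi)
    let f (n : ℕ) : ℝ := (x ^ w a) ^ n
    let g (m : MultisetOn F) : ℝ := x ^ (m.1.map w).sum
    have hf : HasSum f (1 - x ^ w a)⁻¹ := hasSum_geometric_of_lt_one (pow_nonneg hx0 (w a))
      (pow_lt_one₀ hx0 hx1 (hw a (Finset.mem_insert_self a F)))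
    have hfg : Summable fun p : ℕ × MultisetOn F => f p.1 * g p.2 :=
      hf.summable.mul_of_nonneg ih.summable (fun n => pow_nonneg (pow_nonneg hx0 _) n)
        fun m => pow_nonneg hx0 _
    have hcomp : (fun m : MultisetOn (insert a F) => x ^ (m.1.map w).sum) ∘ multisetInsertEquiv ha =
        fun p => f p.1 * g p.2 := by
      funext p
      simp [multisetInsertEquiv, f, g, pow_add, ← pow_mul, mul_comm]
    rw [Finset.prod_insert ha, ← (multisetInsertEquiv ha).hasSum_iff, hcomp]
    exact HasSum.mul (f := f) (g := g) hf ih hfg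

end EulerProduct

namespace GraphClass

variable {α γ : GraphClass} {A : Set GraphClass}

section Counting

/-- The number of classes in `A` with `n` vertices. -/
noncomputable def count (A : Set GraphClass) (n : ℕ) : ℕ := {γ ∈ A | γ.order = n}.ncard

/-- The classes in `A` with fewer than `N` vertices. -/
noncomputable def below (A : Set GraphClass) (N : ℕ) : Finset GraphClass :=
  ((finite_setOf_order_lt N).inter_of_right A).toFinset

lemma mem_below {N : ℕ} : γ ∈ below A N ↔ γ ∈ A ∧ γ.order < N := by
  simp [below]

lemma finite_setOf_order_eq (A : Set GraphClass) (n : ℕ) : {γ ∈ A | γ.order = n}.Finite :=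
  (finite_setOf_order_lt (n + 1)).subset fun _ hγ => hγ.2.trans_lt n.lt_succ_self

lemma count_mono {B : Set GraphClass} (h : A ⊆ B) (n : ℕ) : count A n ≤ count B n :=
  Set.ncard_le_ncard (fun _ hγ => ⟨h hγ.1, hγ.2⟩) (finite_setOf_order_eq B n)

lemma count_diff_add_count {B : Set GraphClass} (h : A ⊆ B) (n : ℕ) :
    count (B \ A) n + count A n = count B n := by
  rw [count, show {γ ∈ B \ A | γ.order = n} = {γ ∈ B | γ.order = n} \ {γ ∈ A | γ.order = n} by
    ext γ; simp only [Set.mem_sdiff, Set.mem_ofPred_eq]; tauto]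
  exact Set.ncard_sdiff_add_ncard_of_subset (fun _ hγ => ⟨h hγ.1, hγ.2⟩) (finite_setOf_order_eq B n)

lemma count_lt_count {B : Set GraphClass} (h : A ⊆ B) (hB : γ ∈ B) (hA : γ ∉ A) :
    count A γ.order < count B γ.order :=
  Set.ncard_lt_ncard ⟨fun _ hδ => ⟨h hδ.1, hδ.2⟩, fun hsub => hA (hsub ⟨hB, rfl⟩).1⟩
    (finite_setOf_order_eq B _)

lemma count_order_pos (h : γ ∈ A) : 0 < count A γ.order :=
  (Set.ncard_pos (finite_setOf_order_eq A _)).2 ⟨γ, h, rfl⟩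

lemma sum_below_eq_sum_range (A : Set GraphClass) (N : ℕ) (f : ℕ → ℝ) :
    ∑ γ ∈ below A N, f γ.order = ∑ n ∈ Finset.range N, count A n * f n := by
  rw [← Finset.sum_fiberwise_of_maps_to (g := order) (t := Finset.range N)
    fun γ hγ => Finset.mem_range.2 (mem_below.1 hγ).2]
  refine Finset.sum_congr rfl fun n hn => ?_
  have hset : {γ ∈ A | γ.order = n} = ((below A N).filter (order · = n) : Finset GraphClass) := by
    ext γ
    simp only [Set.mem_ofPred_eq, Finset.coe_filter, mem_below]
    exact ⟨fun h => ⟨⟨h.1, h.2 ▸ Finset.mem_range.1 hn⟩, h.2⟩, fun h => ⟨h.1.1, h.2⟩⟩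
  rw [count, hset, Finset.sum_congr rfl fun γ hγ => congrArg f (Finset.mem_filter.1 hγ).2,
    Finset.sum_const, nsmul_eq_mul, ← Set.ncard_coe_finset]

/-- The connected classes in `A`. -/
def connectedIn (A : Set GraphClass) : Set GraphClass := {γ ∈ A | γ.IsConnected}

lemma count_connectedIn_zero (A : Set GraphClass) : count (connectedIn A) 0 = 0 := by
  rw [count, Set.ncard_eq_zero (finite_setOf_order_eq _ 0)]
  exact Set.eq_empty_of_forall_notMem fun γ hγ => hγ.1.2.order_ne_zero hγ.2

theorem hasSum_multiset_connectedIn (A : Set GraphClass) (N : ℕ) {x : ℝ} (hx0 : 0 ≤ x)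
    (hx1 : x < 1) :
    HasSum (fun m : MultisetOn (below (connectedIn A) N) =>
      x ^ m.1.sum.order)
      (Real.exp (∑ n ∈ Finset.range N, count (connectedIn A) n * -Real.log (1 - x ^ n))) := by
  classical
  have order_ne_zero {γ} (hγ : γ ∈ below (connectedIn A) N) : γ.order ≠ 0 :=
    (mem_below.1 hγ).1.2.order_ne_zero
  rw [← sum_below_eq_sum_range _ N fun n => -Real.log (1 - x ^ n), Real.exp_sum]
  convert hasSum_multiset_pow order (fun γ => order_ne_zero) hx0 hx1 using 1
  · simp only [order_multiset_sum]
  · refine Finset.prod_congr rfl fun γ hγ => ?_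
    rw [Real.exp_neg, Real.exp_log (sub_pos.2 (pow_lt_one₀ hx0 hx1 (order_ne_zero hγ)))]

lemma sum_pow_order_le_exp {N : ℕ} {D : Finset GraphClass}
    (hD : ∀ γ ∈ D, ∀ α ∈ γ.components, α ∈ below (connectedIn A) N) {x : ℝ} (hx0 : 0 ≤ x)
    (hx1 : x < 1) : ∑ γ ∈ D, x ^ γ.order ≤
      Real.exp (∑ n ∈ Finset.range N, count (connectedIn A) n * -Real.log (1 - x ^ n)) := by
  let f : D ↪ MultisetOn (below (connectedIn A) N) :=
    ⟨fun γ => ⟨γ.1.components, hD γ.1 γ.2⟩, fun _ _ h =>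
      Subtype.ext (components_injective (congrArg Subtype.val h))⟩
  have h := sum_le_hasSum (Finset.univ.map f) (fun _ _ => by positivity)
    (hasSum_multiset_connectedIn A N hx0 hx1)
  rw [Finset.sum_map] at h
  calc ∑ γ ∈ D, x ^ γ.order
      = ∑ γ : D, x ^ (f γ).1.sum.order := by
        rw [← Finset.sum_coe_sort]
        exact Finset.sum_congr rfl fun γ _ => by rw [show (f γ).1.sum = γ from sum_components γ]
    _ ≤ _ := h

end Counting

section CotreeClosed

lemma exists_eq_add_of_mem_components (h : α ∈ γ.components) : ∃ β, γ = α + β := by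
  obtain ⟨m, hm⟩ := Multiset.exists_cons_of_mem h
  exact ⟨m.sum, by rw [← Multiset.sum_cons, ← hm, sum_components]⟩

lemma order_lt_of_mem_components (h : α ∈ γ.components) (hγ : ¬γ.IsConnected) :
    α.order < γ.order := by
  obtain ⟨β, rfl⟩ := exists_eq_add_of_mem_components h
  have hβ : β.order ≠ 0 := fun h0 => hγ <| by
    simpa [eq_zero_of_order_eq_zero h0] using isConnected_of_mem_components h
  rw [order_add]
  omega

/-- A set of cograph classes is cotree-closed if it contains the graphs with at most one vertex and
is closed under complements and connected components, the two steps that decompose a cograph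
along its cotree. -/
structure IsCotreeClosed (A : Set GraphClass) : Prop where
  isCographClass : ∀ γ ∈ A, γ.IsCographClass
  mem_of_order_le_one : ∀ γ, γ.order ≤ 1 → γ ∈ A
  compl_mem : ∀ γ ∈ A, γᶜ ∈ A
  mem_of_mem_components : ∀ γ ∈ A, ∀ α ∈ γ.components, α ∈ A

namespace IsCotreeClosed

lemma count_zero (hA : IsCotreeClosed A) : count A 0 = 1 := by
  rw [count, Set.ncard_eq_one]
  refine ⟨0, Set.eq_singleton_iff_unique_mem.2 ⟨⟨?_, order_zero⟩, ?_⟩⟩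
  · exact hA.mem_of_order_le_one 0 (by simp [order_zero])
  · exact fun γ hγ => eq_zero_of_order_eq_zero hγ.2

lemma count_one (hA : IsCotreeClosed A) : count A 1 = 1 := by
  rw [count, Set.ncard_eq_one]
  refine ⟨point, Set.eq_singleton_iff_unique_mem.2 ⟨⟨?_, order_point⟩, ?_⟩⟩
  · exact hA.mem_of_order_le_one point order_point.le
  · exact fun γ hγ => eq_of_order_eq_of_le_one (hγ.2.trans order_point.symm) hγ.2.le

lemma count_connectedIn_one (hA : IsCotreeClosed A) : count (connectedIn A) 1 = 1 := by
  refine Eq.trans (congrArg Set.ncard (Set.ext fun γ => ?_)) hA.count_one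
  exact ⟨fun h => ⟨h.1.1, h.2⟩, fun h => ⟨⟨h.1, isConnected_of_order_eq_one h.2⟩, h.2⟩⟩

lemma count_eq_two_mul (hA : IsCotreeClosed A) {n : ℕ} (hn : 2 ≤ n) :
    count A n = 2 * count (connectedIn A) n := by
  have isConnected_compl_iff {γ} (hγ : γ ∈ A) (h : γ.order = n) :=
    (hA.isCographClass γ hγ).isConnected_compl_iff (h ▸ hn)
  set C := {γ ∈ connectedIn A | γ.order = n}
  have hC : C.Finite := finite_setOf_order_eq _ n
  have hunion : {γ ∈ A | γ.order = n} = C ∪ compl '' C := by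
    ext γ
    constructor
    · rintro ⟨hγ, hn⟩
      by_cases hconn : γ.IsConnected
      · exact Or.inl ⟨⟨hγ, hconn⟩, hn⟩
      · exact Or.inr ⟨γᶜ, ⟨⟨hA.compl_mem γ hγ, (isConnected_compl_iff hγ hn).2 hconn⟩,
          γ.order_compl.trans hn⟩, γ.compl_compl⟩
    · rintro (hγ | ⟨δ, hδ, rfl⟩)
      · exact ⟨hγ.1.1, hγ.2⟩
      · exact ⟨hA.compl_mem δ hδ.1.1, δ.order_compl.trans hδ.2⟩
  have hdisj : Disjoint C (compl '' C) := by
    rw [Set.disjoint_left]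
    rintro _ h ⟨δ, hδ, rfl⟩
    exact (isConnected_compl_iff hδ.1.1 hδ.2).1 h.1.2 hδ.1.2
  rw [count, hunion, Set.ncard_union_eq hdisj hC (hC.image _),
    Set.ncard_image_of_injective _ compl_injective, ← two_mul]
  rfl

lemma sum_below (hA : IsCotreeClosed A) {N : ℕ} (hN : 2 ≤ N) (x : ℝ) :
    ∑ γ ∈ below A N, x ^ γ.order =
      1 + 2 * (∑ n ∈ Finset.range N, count (connectedIn A) n * x ^ n) - x := by
  rw [sum_below_eq_sum_range A N (x ^ ·)]
  induction N, hN using Nat.le_induction with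
  | base =>
    simp only [Finset.sum_range_succ, Finset.sum_range_zero, hA.count_zero, hA.count_one,
      count_connectedIn_zero, hA.count_connectedIn_one]
    push_cast
    ring
  | succ N hN ih =>
    rw [Finset.sum_range_succ, Finset.sum_range_succ, ih, hA.count_eq_two_mul hN]
    push_cast
    ring

open Classical in
lemma mem_below_of_mem_components (hA : IsCotreeClosed A) {N : ℕ} (hγ : γ ∈ below A (N + 1))
    (hnew : γ ∉ below (connectedIn A) (N + 1) \ below (connectedIn A) N) (hα : α ∈ γ.components) :
    α ∈ below (connectedIn A) N := by
  obtain ⟨hγA, hγN⟩ := mem_below.1 hγ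
  by_cases hconn : γ.IsConnected
  · rw [hconn.components_eq, Multiset.mem_singleton] at hα
    rw [hα]
    by_contra hnot
    exact hnew (Finset.mem_sdiff.2 ⟨mem_below.2 ⟨⟨hγA, hconn⟩, hγN⟩, hnot⟩)
  · have hlt := order_lt_of_mem_components hα hconn
    exact mem_below.2
      ⟨⟨hA.mem_of_mem_components γ hγA α hα, isConnected_of_mem_components hα⟩, by omega⟩

theorem truncationLEEuler (hA : IsCotreeClosed A) :
    TruncationLEEuler fun n => count (connectedIn A) n := by
  classical
  intro N x hx0 hx1
  rcases Nat.eq_zero_or_pos N with rfl | hN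
  · simpa [count_connectedIn_zero] using hx0
  set C := below (connectedIn A) (N + 1) \ below (connectedIn A) N
  have hsumC : ∑ γ ∈ C, x ^ γ.order =
      (∑ n ∈ Finset.range (N + 1), count (connectedIn A) n * x ^ n) -
        ∑ n ∈ Finset.range N, count (connectedIn A) n * x ^ n := by
    rw [Finset.sum_sdiff_eq_sub, sum_below_eq_sum_range _ _ (x ^ ·),
      sum_below_eq_sum_range _ _ (x ^ ·)]
    exact fun γ hγ => mem_below.2 ((mem_below.1 hγ).imp_right Nat.lt_succ_of_lt)
  have hsumD : ∑ γ ∈ below A (N + 1) \ C, x ^ γ.order =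
      ∑ γ ∈ below A (N + 1), x ^ γ.order - ∑ γ ∈ C, x ^ γ.order :=
    Finset.sum_sdiff_eq_sub fun γ hγ =>
      mem_below.2 ((mem_below.1 (Finset.mem_sdiff.1 hγ).1).imp_left And.left)
  have hexp := sum_pow_order_le_exp (D := below A (N + 1) \ C)
    (fun γ hγ α => hA.mem_below_of_mem_components (Finset.mem_sdiff.1 hγ).1
      (Finset.mem_sdiff.1 hγ).2) hx0 hx1
  have hbelow := hA.sum_below (show 2 ≤ N + 1 by omega) x
  linarith

theorem eulerLETotal (hA : IsCotreeClosed A)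
    (hsum : ∀ m : Multiset GraphClass, (∀ γ ∈ m, γ ∈ A) → m.sum ∈ A) :
    EulerLETotal fun n => count (connectedIn A) n := by
  classical
  intro N x hx0 hx1 hsummable
  rw [← le_sub_iff_add_le]
  refine hasSum_le_of_sum_le (hasSum_multiset_connectedIn A N hx0 hx1) fun M => ?_
  obtain ⟨K, hK⟩ : ∃ K, ∀ m ∈ M, m.1.sum.order < K :=
    ⟨M.sup (fun m => m.1.sum.order) + 1, fun m hm =>
      Nat.lt_succ_of_le (Finset.le_sup (f := fun m => m.1.sum.order) hm)⟩
  have hinj : Set.InjOn (fun m : MultisetOn (below (connectedIn A) N) => m.1.sum) M := by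
    have components_sum (m : MultisetOn (below (connectedIn A) N)) :
        m.1.sum.components = m.1 :=
      components_multiset_sum fun γ hγ => (mem_below.1 (m.2 γ hγ)).1.2
    intro m _ m' _ h
    exact Subtype.ext ((components_sum m).symm.trans ((congrArg components h).trans
      (components_sum m')))
  have hsub : M.image (fun m => m.1.sum) ⊆ below A (K + 2) := by
    intro γ hγ
    obtain ⟨m, hm, rfl⟩ := Finset.mem_image.1 hγ
    exact mem_below.2 ⟨hsum m.1 fun γ hγ => (mem_below.1 (m.2 γ hγ)).1.1,
      (hK m hm).trans (by omega)⟩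
  calc ∑ m ∈ M, x ^ m.1.sum.order
      = ∑ γ ∈ M.image (fun m => m.1.sum), x ^ γ.order :=
      (Finset.sum_image (f := fun γ => x ^ γ.order) hinj).symm
    _ ≤ ∑ γ ∈ below A (K + 2), x ^ γ.order :=
      Finset.sum_le_sum_of_subset_of_nonneg hsub fun _ _ _ => by positivity
    _ = 1 + 2 * (∑ n ∈ Finset.range (K + 2), count (connectedIn A) n * x ^ n) - x :=
      hA.sum_below (by omega) x
    _ ≤ 1 + 2 * (∑' n, count (connectedIn A) n * x ^ n) - x := by
      gcongr
      exact hsummable.sum_le_tsum _ fun _ _ => by positivity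

end IsCotreeClosed

end CotreeClosed

end GraphClass

/-! ### Almost all cographs have a regular mate -/

namespace GraphClass

section Cographs

variable {α β γ δ : GraphClass}

/-- The isomorphism classes of cographs. -/
def cographs : Set GraphClass := {γ | γ.IsCographClass}

/-- The isomorphism classes of cographs without a regular mate. -/
def matelessCographs : Set GraphClass := {γ | γ.IsCographClass ∧ ¬γ.HasRegularMate}

lemma matelessCographs_subset_cographs : matelessCographs ⊆ cographs := fun _ => And.left

lemma isCotreeClosed_cographs : IsCotreeClosed cographs where
  isCographClass _ := id
  mem_of_order_le_one _ := isCographClass_of_order_le_one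
  compl_mem _ := isCographClass_compl.2
  mem_of_mem_components γ hγ α hα := by
    obtain ⟨β, rfl⟩ := exists_eq_add_of_mem_components hα
    exact (isCographClass_add.1 hγ).1

lemma isCotreeClosed_matelessCographs : IsCotreeClosed matelessCographs where
  isCographClass _ := And.left
  mem_of_order_le_one γ h := ⟨isCographClass_of_order_le_one h, fun hγ => h.not_gt hγ.one_lt_order⟩
  compl_mem γ hγ :=
    ⟨isCographClass_compl.2 hγ.1, fun h => hγ.2 (by simpa only [compl_compl] using h.compl)⟩
  mem_of_mem_components γ hγ α hα := by
    obtain ⟨β, rfl⟩ := exists_eq_add_of_mem_components hα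
    exact ⟨(isCographClass_add.1 hγ.1).1, fun h => hγ.2 (h.add β)⟩

lemma count_connectedIn_cographs_pos {n : ℕ} (hn : n ≠ 0) :
    0 < count (connectedIn cographs) n := by
  have hcograph : (n • point).IsCographClass := isCographClass_nsmul isCographClass_point
  have horder : (n • point).order = n := by rw [order_nsmul, order_point, mul_one]
  rcases isConnected_or_compl (horder.trans_ne hn) with h | h
  · simpa only [horder] using count_order_pos (A := connectedIn cographs) ⟨hcograph, h⟩
  · simpa only [order_compl, horder] using
      count_order_pos (A := connectedIn cographs) ⟨isCographClass_compl.2 hcograph, h⟩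

lemma eq_or_eq_swap_of_add_eq_add (hα : α.IsConnected) (hγ : γ.IsConnected) (hδ : δ.IsConnected)
    (h : α + β = γ + δ) : (α, β) = (γ, δ) ∨ (α, β) = (δ, γ) := by
  have hα' : α ∈ (γ + δ).components := by
    rw [← h, components_add, hα.components_eq]
    exact Multiset.mem_add.2 (.inl (Multiset.mem_singleton_self α))
  rw [components_add, hγ.components_eq, hδ.components_eq, Multiset.mem_add, Multiset.mem_singleton,
    Multiset.mem_singleton] at hα'
  rcases hα' with rfl | rfl
  · exact .inl (by rw [add_left_cancel h])
  · exact .inr (by rw [add_left_cancel (h.trans (add_comm γ α))])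

lemma count_connectedIn_mul_le {A : Set GraphClass} (hA : ∀ α ∈ A, ∀ β ∈ A, (α + β)ᶜ ∈ A)
    {m n : ℕ} (hm : m ≠ 0) (hn : n ≠ 0) :
    count (connectedIn A) m * count (connectedIn A) n ≤ 2 * count (connectedIn A) (m + n) := by
  classical
  have hfin := finite_setOf_order_eq (connectedIn A)
  simp only [count, Set.ncard_eq_toFinset_card _ (hfin _)]
  rw [← Finset.card_product]
  refine (Finset.card_le_mul_card_image (f := fun p : GraphClass × GraphClass => (p.1 + p.2)ᶜ)
    _ 2 ?_).trans (Nat.mul_le_mul_left 2 (Finset.card_le_card ?_))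
  · intro γ hγ
    obtain ⟨⟨α, β⟩, hp, rfl⟩ := Finset.mem_image.1 hγ
    refine (Finset.card_le_card (t := {(α, β), (β, α)}) fun q hq => ?_).trans Finset.card_le_two
    obtain ⟨hq, heq⟩ := Finset.mem_filter.1 hq
    simp only [Finset.mem_product, Set.Finite.mem_toFinset] at hp hq
    simpa using eq_or_eq_swap_of_add_eq_add hq.1.1.2 hp.1.1.2 hp.2.1.2 (compl_injective heq)
  · intro γ hγ
    obtain ⟨⟨α, β⟩, hp, rfl⟩ := Finset.mem_image.1 hγ
    simp only [Finset.mem_product, Set.Finite.mem_toFinset] at hp ⊢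
    obtain ⟨⟨⟨hα, -⟩, rfl⟩, ⟨⟨hβ, -⟩, rfl⟩⟩ := hp
    exact ⟨⟨hA α hα β hβ, isConnected_compl_add hm hn⟩, (order_compl _).trans (order_add α β)⟩

theorem tendsto_count_matelessCographs_div :
    Filter.Tendsto (fun n => (count matelessCographs n : ℝ) / count cographs n) Filter.atTop
      (nhds 0) := by
  have hsub : connectedIn matelessCographs ⊆ connectedIn cographs := fun _ hγ => ⟨hγ.1.1, hγ.2⟩
  have hlt : ∃ n, count (connectedIn matelessCographs) n < count (connectedIn cographs) n := by
    obtain ⟨γ, hconn, hcograph, hmate⟩ := exists_isConnected_isCographClass_hasRegularMate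
    exact ⟨γ.order, count_lt_count hsub ⟨hcograph, hconn⟩ fun h => h.1.2 hmate⟩
  have hsum (m : Multiset GraphClass) (hm : ∀ γ ∈ m, γ ∈ cographs) : m.sum ∈ cographs :=
    isCographClass_multiset_sum.2 hm
  have hadd α (hα : α ∈ cographs) β (hβ : β ∈ cographs) : (α + β)ᶜ ∈ cographs :=
    isCographClass_compl.2 (isCographClass_add.2 ⟨hα, hβ⟩)
  have hconnected := tendsto_div_zero_of_euler
    (s := fun n => count (connectedIn matelessCographs) n)
    (t := fun n => count (connectedIn cographs) n) (C := 2) (fun n => Nat.cast_nonneg _)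
    (by simp [count_connectedIn_zero]) isCotreeClosed_matelessCographs.truncationLEEuler
    (by simp [count_connectedIn_zero]) isCotreeClosed_cographs.truncationLEEuler
    (isCotreeClosed_cographs.eulerLETotal hsum)
    (fun n => Nat.cast_le.2 (count_mono hsub n))
    (hlt.imp fun n hn => Nat.cast_lt.2 hn)
    (fun n hn => Nat.one_le_cast.2 (count_connectedIn_cographs_pos hn))
    (fun m n hm hn => by exact_mod_cast count_connectedIn_mul_le hadd hm hn)
  refine hconnected.congr' ((Filter.eventually_ge_atTop 2).mono fun n hn => ?_)
  dsimp only
  rw [isCotreeClosed_matelessCographs.count_eq_two_mul hn,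
    isCotreeClosed_cographs.count_eq_two_mul hn, Nat.cast_mul, Nat.cast_mul,
    mul_div_mul_left _ _ (by norm_num)]

end Cographs

section ClassCount

variable {n : ℕ} {G : SimpleGraph (Fin n)}

theorem classCount_eq_count (A : Set GraphClass) (n : ℕ) :
    classCount n (fun G => mk G ∈ A) = count A n := by
  rw [classCount, count, ← Nat.card_coe_set_eq]
  refine Nat.card_congr (Equiv.ofBijective (Quot.lift (fun G => ⟨mk G.1, G.2, by simp [order_mk]⟩)
    fun G H e => Subtype.ext (mk_eq_mk_iff.2 e)) ⟨?_, ?_⟩)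
  · rintro ⟨G⟩ ⟨H⟩ h
    exact Quot.sound (mk_eq_mk_iff.1 (congrArg Subtype.val h))
  · rintro ⟨γ, hγ, hn⟩
    obtain ⟨G, rfl⟩ := eq_mk_of_order_eq hn
    exact ⟨Quot.mk _ ⟨G, hγ⟩, rfl⟩

lemma classCount_mono {P Q : SimpleGraph (Fin n) → Prop} (h : ∀ G, P G → Q G) :
    classCount n P ≤ classCount n Q := by
  have equivalence : Equivalence fun G H : {G // Q G} => Nonempty (G.1 ≃g H.1) :=
    ⟨fun _ => ⟨Iso.refl⟩, fun ⟨e⟩ => ⟨e.symm⟩, fun ⟨e⟩ ⟨f⟩ => ⟨e.trans f⟩⟩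
  refine Nat.card_le_card_of_injective
    (Quot.map (fun G => ⟨G.1, h G.1 G.2⟩) fun G H e => e) ?_
  rintro ⟨G⟩ ⟨H⟩ hGH
  exact Quot.sound (equivalence.eqvGen_iff.1 (Quot.eqvGen_exact hGH))

lemma tendsto_classCount_div_of_imp {P Q R : ∀ n, SimpleGraph (Fin n) → Prop}
    (hPQ : ∀ n G, P n G → Q n G) (hQR : ∀ n G, Q n G → R n G)
    (h : Filter.Tendsto (fun n => (classCount n (P n) : ℝ) / classCount n (R n)) Filter.atTop
      (nhds 1)) :
    Filter.Tendsto (fun n => (classCount n (Q n) : ℝ) / classCount n (R n)) Filter.atTop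
      (nhds 1) := by
  refine tendsto_of_tendsto_of_tendsto_of_le_of_le h tendsto_const_nhds (fun n => ?_) fun n => ?_
  · gcongr
    exact classCount_mono (hPQ n)
  · exact div_le_one_of_le₀ (Nat.cast_le.2 (classCount_mono (hQR n))) (Nat.cast_nonneg _)

theorem tendsto_classCount_hasRegularMate_div :
    Filter.Tendsto (fun n : ℕ =>
      (classCount n (fun G => IsCograph G ∧ (mk G).HasRegularMate) : ℝ) /
        classCount n (fun G => IsCograph G)) Filter.atTop (nhds 1) := by
  have hcograph n : classCount n (fun G => IsCograph G) = count cographs n := by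
    simp only [← classCount_eq_count, cographs, Set.mem_ofPred_eq, isCographClass_mk]
  have hmate n : classCount n (fun G => IsCograph G ∧ (mk G).HasRegularMate) =
      count (cographs \ matelessCographs) n := by
    rw [← classCount_eq_count]
    congr! 2 with G
    simp only [cographs, matelessCographs, Set.mem_sdiff, Set.mem_ofPred_eq, isCographClass_mk]
    tauto
  have hpos : ∀ᶠ n in Filter.atTop, count cographs n ≠ 0 :=
    (Filter.eventually_ne_atTop 0).mono fun n hn =>
      ((count_connectedIn_cographs_pos hn).trans_le (count_mono (fun _ => And.left) n)).ne'
  have h := tendsto_count_matelessCographs_div.const_sub 1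
  rw [sub_zero] at h
  refine h.congr' (hpos.mono fun n hn => ?_)
  have hn : (count cographs n : ℝ) ≠ 0 := Nat.cast_ne_zero.2 hn
  dsimp only
  rw [hmate, hcograph, one_sub_div hn,
    ← count_diff_add_count matelessCographs_subset_cographs n, Nat.cast_add, add_sub_cancel_right]

lemma HasRegularMate.exists_genCospectral (h : (mk G).HasRegularMate) :
    ∃ H : SimpleGraph (Fin n), GenCospectral G H ∧ ¬Nonempty (G ≃g H) := by
  obtain ⟨δ, hne, hδ⟩ := h
  have horder : δ.order = n := by simpa [order_mk] using hδ.card_eq.symm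
  obtain ⟨H, rfl⟩ := eq_mk_of_order_eq horder
  obtain ⟨e⟩ := nonempty_graph_mk_iso G
  obtain ⟨f⟩ := nonempty_graph_mk_iso H
  exact ⟨H, ((RegularlySimilar.of_iso e.symm).trans (hδ.trans (.of_iso f))).genCospectral,
    fun hGH => hne (mk_eq_mk_iff.2 hGH).symm⟩

end ClassCount

end GraphClass

theorem almost_all_cographs_have_cospectral_mate_general :
    Filter.Tendsto
      (fun n : ℕ =>
        (classCount n (fun G => IsCograph G ∧
            ∃ H : SimpleGraph (Fin n), GenCospectral G H ∧ ¬ Nonempty (G ≃g H)) : ℝ) /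
        (classCount n (fun G => IsCograph G) : ℝ))
      Filter.atTop (nhds 1) :=
  GraphClass.tendsto_classCount_div_of_imp (R := fun _ G => IsCograph G)
    (fun _ _ h => ⟨h.1, h.2.exists_genCospectral⟩) (fun _ _ => And.left)
    GraphClass.tendsto_classCount_hasRegularMate_div

/-- **Almost all cographs have a cospectral mate.** If `c n` is the number of isomorphism
classes of cographs on `n` vertices and `c* n` the number of isomorphism classes of cographs
on `n` vertices having a cospectral, non-isomorphic mate, then `c* n / c n → 1`. -/
theorem almost_all_cographs_have_cospectral_mate :
    Filter.Tendsto
      (fun n : ℕ =>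
        (classCount n (fun G => IsCograph G ∧
            ∃ H : SimpleGraph (Fin n), Cospectral G H ∧ ¬ Nonempty (G ≃g H)) : ℝ) /
        (classCount n (fun G => IsCograph G) : ℝ))
      Filter.atTop (nhds 1) :=
  GraphClass.tendsto_classCount_div_of_imp (R := fun _ G => IsCograph G)
    (fun _ _ h => ⟨h.1, h.2.imp fun _ hH => ⟨hH.1.1, hH.2⟩⟩) (fun _ _ => And.left)
    almost_all_cographs_have_cospectral_mate_general
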